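/- arXiv:1810.05190 — 3 statements merged into one kernel-verified Lean document; each statement's English description precedes it below -/
import Mathlib

section
/- Let m, n, p, q be natural numbers. If p ≥ 2q and n ≥ q+1, then Maker has a winning strategy for the (p,q)-crossing game on Λ_{m×n}. -/
namespace CrossingGames

/-- A vertex of the square integer lattice `ℤ²`. -/
abbrev Vtx : Type := ℤ × ℤ

/-- An edge of the square integer lattice `ℤ²`, encoded as a base vertex together with a
direction: `(v, true)` is the horizontal edge joining `v = (x,y)` to `(x+1,y)`, while
`(v, false)` is the vertical edge joining `v = (x,y)` to `(x,y+1)`. -/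
abbrev Edge : Type := Vtx × Bool

/-- The two endpoints of an edge. -/
def ends (e : Edge) : Vtx × Vtx :=
  (e.1, if e.2 then (e.1.1 + 1, e.1.2) else (e.1.1, e.1.2 + 1))

/-- The edge `e` joins the vertices `u` and `v`. -/
def joins (e : Edge) (u v : Vtx) : Prop :=
  ((ends e).1 = u ∧ (ends e).2 = v) ∨ ((ends e).1 = v ∧ (ends e).2 = u)

/-- The vertex set of the grid `Λ_{m×n}`: all `(x,y) ∈ ℤ²` with `1 ≤ x ≤ m`, `1 ≤ y ≤ n`. -/
def lamVtx (m n : ℕ) : Set Vtx :=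
  {v | 1 ≤ v.1 ∧ v.1 ≤ (m : ℤ) ∧ 1 ≤ v.2 ∧ v.2 ≤ (n : ℤ)}

/-- The edge set of the grid `Λ_{m×n}`: lattice edges with both endpoints in `Λ_{m×n}`. -/
def lamEdges (m n : ℕ) : Set Edge :=
  {e | (ends e).1 ∈ lamVtx m n ∧ (ends e).2 ∈ lamVtx m n}

/-- The edge set of the board `S_{m×n}`: the grid `Λ_{m×n}` with all of its leftmost and
rightmost vertical edges deleted. -/
def sEdges (m n : ℕ) : Set Edge :=
  {e ∈ lamEdges m n | ¬ (e.2 = false ∧ (e.1.1 = 1 ∨ e.1.1 = (m : ℤ)))}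

/-- The list of consecutive pairs of a list. -/
def cp {α : Type*} (l : List α) : List (α × α) := l.zip l.tail

/-- `S` contains all the edges of a left-right crossing path of a board with `m` columns
and `n` rows: a path of edges of `S` joining a vertex `(1,y)` on the left-hand side of the
board to a vertex `(m,y')` on its right-hand side. -/
def HasCrossing (m n : ℕ) (S : Set Edge) : Prop :=
  ∃ l : List Vtx,
    (∃ v, l.head? = some v ∧ v.1 = 1) ∧
    (∃ v, l.getLast? = some v ∧ v.1 = (m : ℤ)) ∧
    (∀ v ∈ l, v ∈ lamVtx m n) ∧
    ∀ p ∈ cp l, ∃ e ∈ S, joins e p.1 p.2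

/-- A strategy: given the list of all moves played so far (oldest first), produce the
next move (a finite set of edges to claim). -/
abbrev Strategy : Type := List (Finset Edge) → Finset Edge

/-- The union of the moves sitting in positions of the given parity of a history
(`true`: positions 0, 2, 4, …; `false`: positions 1, 3, 5, …). -/
def altUnion : Bool → List (Finset Edge) → Finset Edge
  | _, [] => ∅
  | true, mv :: h => mv ∪ altUnion false h
  | false, _ :: h => altUnion true h

/-- All edges claimed by the player moving first (i.e. on even positions) in a history. -/
def firstClaimed (h : List (Finset Edge)) : Finset Edge := altUnion true h

/-- All edges claimed by the player moving second (i.e. on odd positions) in a history. -/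
def secondClaimed (h : List (Finset Edge)) : Finset Edge := altUnion false h

/-- All edges claimed so far in a history. -/
def allClaimed (h : List (Finset Edge)) : Finset Edge := h.foldr (· ∪ ·) ∅

/-- The history of moves (oldest first) after `t` full rounds, when the player moving
first uses strategy `σ` and the player moving second uses strategy `τ`. -/
def hist (σ τ : Strategy) : ℕ → List (Finset Edge)
  | 0 => []
  | t + 1 =>
    let h := hist σ τ t
    h ++ [σ h, τ (h ++ [σ h])]

/-- The move `mv` is legal on `board` after the history `h` for a player of bias `k`: it
consists of as-yet-unclaimed edges of the board, and there are exactly `k` of them, unless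
fewer than `k` unclaimed edges remain, in which case the player claims all of them. -/
def LegalMove (board : Set Edge) (h : List (Finset Edge)) (k : ℕ) (mv : Finset Edge) : Prop :=
  (↑mv : Set Edge) ⊆ board \ ↑(allClaimed h) ∧
    (mv.card = k ∨ (mv.card < k ∧ board \ ↑(allClaimed h) ⊆ (↑mv : Set Edge)))

/-- The player moving first (with bias `p`) always moves legally when playing `σ`
against `τ`. -/
def FirstLegal (board : Set Edge) (p : ℕ) (σ τ : Strategy) : Prop :=
  ∀ t, LegalMove board (hist σ τ t) p (σ (hist σ τ t))

/-- The player moving second (with bias `q`) always moves legally when playing `τ`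
against `σ`. -/
def SecondLegal (board : Set Edge) (q : ℕ) (σ τ : Strategy) : Prop :=
  ∀ t, LegalMove board (hist σ τ t ++ [σ (hist σ τ t)]) q (τ (hist σ τ t ++ [σ (hist σ τ t)]))

/-- Maker (playing first and claiming `p` edges per turn) has a winning strategy for the
Maker–Breaker game on `board` in which Breaker claims `q` edges per turn: she can
guarantee that at some point her claimed edges satisfy the winning condition `win`. -/
def MakerWins (board : Set Edge) (win : Set Edge → Prop) (p q : ℕ) : Prop :=
  ∃ σ : Strategy, ∀ τ : Strategy, SecondLegal board q σ τ →
    FirstLegal board p σ τ ∧ ∃ t, win ↑(firstClaimed (hist σ τ t))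

/-- Breaker (playing second and claiming `q` edges per turn) has a winning strategy for
the Maker–Breaker game on `board` in which Maker claims `p` edges per turn: he can
forever prevent Maker's claimed edges from satisfying the winning condition `win`. -/
def BreakerWins (board : Set Edge) (win : Set Edge → Prop) (p q : ℕ) : Prop :=
  ∃ τ : Strategy, ∀ σ : Strategy, FirstLegal board p σ τ →
    SecondLegal board q σ τ ∧ ∀ t, ¬ win ↑(firstClaimed (hist σ τ t))


/-! ### abstract graph part -/

def cls (k Δ : ℤ) : ℕ :=
  if k = 1 then (if Δ ≤ -2 then 0 else if Δ ≤ -1 then 1 else 4)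
  else if k = -1 then (if Δ ≤ -1 then 0 else if Δ ≤ 0 then 2 else 3)
  else (if Δ ≤ -2 then 0 else if Δ ≤ -1 then 1 else if Δ ≤ 0 then 2 else 3)

lemma cls_mono (k : ℤ) {x y : ℤ} (h : x ≤ y) : cls k x ≤ cls k y := by
  unfold cls; split_ifs <;> omega

lemma cls_le_four (k x : ℤ) : cls k x ≤ 4 := by
  unfold cls; split_ifs <;> omega

structure Gr (E V : Type) where
  a : E → V
  b : E → V
  kd : E → ℤ
  bot : V
  top : V
  n : ℤ
  kbot : ∀ e, a e = bot ∨ b e = bot → kd e = 0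

namespace Gr
variable {E V : Type}

def src (G : Gr E V) (d : E × Bool) : V := if d.2 then G.a d.1 else G.b d.1
def dst (G : Gr E V) (d : E × Bool) : V := if d.2 then G.b d.1 else G.a d.1
def kind (G : Gr E V) (d : E × Bool) : ℤ := if d.2 then G.kd d.1 else - G.kd d.1
def rev (d : E × Bool) : E × Bool := (d.1, !d.2)

@[simp] lemma src_rev (G : Gr E V) (d : E × Bool) : G.src (rev d) = G.dst d := by
  rcases d with ⟨e, _ | _⟩ <;> simp [src, dst, rev]
@[simp] lemma dst_rev (G : Gr E V) (d : E × Bool) : G.dst (rev d) = G.src d := by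
  rcases d with ⟨e, _ | _⟩ <;> simp [src, dst, rev]
@[simp] lemma kind_rev (G : Gr E V) (d : E × Bool) : G.kind (rev d) = - G.kind d := by
  rcases d with ⟨e, _ | _⟩ <;> simp [kind, rev]
@[simp] lemma rev_fst (d : E × Bool) : (rev d).1 = d.1 := rfl
lemma kind_bot (G : Gr E V) (d : E × Bool) (h : G.src d = G.bot) : G.kind d = 0 := by
  rcases d with ⟨e, _ | _⟩ <;> simp [src, kind] at *
  · exact G.kbot e (Or.inr h)
  · exact G.kbot e (Or.inl h)

open Classical in
noncomputable def Ex (G : Gr E V) (O : Finset E) (r : V → V) (h : V → ℤ) (i : ℕ) (c : V) :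
    Finset (E × Bool) :=
  (O ×ˢ Finset.univ).filter (fun d => r (G.src d) = c ∧ r (G.dst d) ≠ c ∧
    cls (G.kind d) (h (G.dst d) - h (G.src d)) ≤ i)

def bad (G : Gr E V) (h : V → ℤ) (d : E × Bool) : Prop :=
  ¬ (G.src d = G.bot ∨ (G.kind d = 1 ∧ h (G.src d) ≤ 1))

open Classical in
noncomputable def Bad (G : Gr E V) (O : Finset E) (r : V → V) (h : V → ℤ) : Finset (E × Bool) :=
  (O ×ˢ Finset.univ).filter (fun d => r (G.src d) = r G.bot ∧ r (G.dst d) ≠ r G.bot ∧ G.bad h d)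

lemma mem_Ex {G : Gr E V} {O : Finset E} {r : V → V} {h : V → ℤ} {i : ℕ} {c : V} {d : E × Bool} :
    d ∈ G.Ex O r h i c ↔ d.1 ∈ O ∧ r (G.src d) = c ∧ r (G.dst d) ≠ c ∧
    cls (G.kind d) (h (G.dst d) - h (G.src d)) ≤ i := by
  simp [Ex]

lemma mem_Bad {G : Gr E V} {O : Finset E} {r : V → V} {h : V → ℤ} {d : E × Bool} :
    d ∈ G.Bad O r h ↔ d.1 ∈ O ∧ r (G.src d) = r G.bot ∧ r (G.dst d) ≠ r G.bot ∧ G.bad h d := by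
  simp [Bad]

open Classical in
noncomputable def cnt (r : V → V) (T : Multiset V) (c : V) : ℕ := T.countP (fun v => r v = c)

structure Base (G : Gr E V) (r : V → V) (h : V → ℤ) : Prop where
  hconst : ∀ u v, r u = r v → r u ≠ r G.bot → h u = h v
  hbot : h G.bot = 0
  htop : h G.top = G.n
  pos : ∀ v, v ≠ G.bot → 1 ≤ h v
  le : ∀ v, h v ≤ G.n
  ne : r G.bot ≠ r G.top

structure Flags (G : Gr E V) (O : Finset E) (r : V → V) (h : V → ℤ) (T : Multiset V) : Prop where
  ex : ∀ c, c ≠ r G.bot → ∀ i ≤ 4, (c = r G.top → i = 0) →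
    (G.Ex O r h i c).card ≤ i + cnt r T c
  bd : (G.Bad O r h).card ≤ cnt r T (r G.bot)

lemma Ex_mono {G : Gr E V} {O O' : Finset E} (hO : O' ⊆ O) (r : V → V) (h : V → ℤ) (i : ℕ) (c : V) :
    G.Ex O' r h i c ⊆ G.Ex O r h i c := by
  intro d; simp only [mem_Ex]; exact fun ⟨h1, h2⟩ => ⟨hO h1, h2⟩

lemma Bad_mono {G : Gr E V} {O O' : Finset E} (hO : O' ⊆ O) (r : V → V) (h : V → ℤ) :
    G.Bad O' r h ⊆ G.Bad O r h := by
  intro d; simp only [mem_Bad]; exact fun ⟨h1, h2⟩ => ⟨hO h1, h2⟩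

lemma Flags.mono {G : Gr E V} {O O' : Finset E} {r : V → V} {h : V → ℤ} {T : Multiset V}
    (hF : G.Flags O r h T) (hO : O' ⊆ O) : G.Flags O' r h T :=
  ⟨fun c hc i hi ht => (Finset.card_le_card (Ex_mono hO r h i c)).trans (hF.ex c hc i hi ht),
   (Finset.card_le_card (Bad_mono hO r h)).trans hF.bd⟩

open Classical in
/-- one kill -/
lemma kill_one (G : Gr E V) (O : Finset E) (r : V → V) (h : V → ℤ) (T : Multiset V) (v : V)
    (hF : G.Flags O r h (v ::ₘ T)) :
    ∃ D ⊆ O, (∀ e ∈ D, r (G.a e) ≠ r (G.b e)) ∧ D.card ≤ 1 ∧ G.Flags (O \ D) r h T := by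
  have hc1 : cnt r (v ::ₘ T) (r v) = cnt r T (r v) + 1 := by simp [cnt]
  have hc2 : ∀ c, c ≠ r v → cnt r (v ::ₘ T) c = cnt r T c := by
    intro c hc; simp [cnt, hc.symm]
  have ext : ∀ d : E × Bool, r (G.src d) ≠ r (G.dst d) → r (G.a d.1) ≠ r (G.b d.1) := by
    rintro ⟨e, _ | _⟩ hd
    · simpa [src, dst] using hd.symm
    · simpa [src, dst] using hd
  by_cases hb : r v = r G.bot
  · by_cases hB : (G.Bad O r h).Nonempty
    · obtain ⟨d, hd⟩ := hB
      have hd' := mem_Bad.1 hd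
      refine ⟨{d.1}, by simpa using hd'.1, ?_, by simp, ?_, ?_⟩
      · intro e he; rw [Finset.mem_singleton] at he; subst he
        exact ext d (by rw [hd'.2.1]; exact hd'.2.2.1.symm)
      · intro c hc i hi ht
        refine (Finset.card_le_card (Ex_mono Finset.sdiff_subset r h i c)).trans ?_
        rw [← hc2 c (by rw [hb]; exact hc)]; exact hF.ex c hc i hi ht
      · have : G.Bad (O \ {d.1}) r h ⊆ (G.Bad O r h).erase d := by
          intro x hx
          rw [Finset.mem_erase]
          refine ⟨?_, Bad_mono Finset.sdiff_subset r h hx⟩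
          rintro rfl; simp [mem_Bad] at hx
        have h1 := Finset.card_le_card this
        rw [Finset.card_erase_of_mem hd] at h1
        have h2 := hF.bd
        rw [← hb, hc1] at h2
        rw [← hb]; omega
    · refine ⟨∅, by simp, by simp, by simp, ?_, ?_⟩
      · intro c hc i hi ht
        refine (Finset.card_le_card (Ex_mono Finset.sdiff_subset r h i c)).trans ?_
        rw [← hc2 c (by rw [hb]; exact hc)]; exact hF.ex c hc i hi ht
      · rw [Finset.not_nonempty_iff_eq_empty] at hB
        simp [hB]
  · have key : ∃ D ⊆ O, (∀ e ∈ D, r (G.a e) ≠ r (G.b e)) ∧ D.card ≤ 1 ∧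
        ∀ i ≤ 4, (r v = r G.top → i = 0) → (G.Ex (O \ D) r h i (r v)).card ≤ i + cnt r T (r v) := by
      by_cases hE : (G.Ex O r h 4 (r v)).Nonempty
      · obtain ⟨d, hd, hmin⟩ := Finset.exists_min_image _
          (fun d => cls (G.kind d) (h (G.dst d) - h (G.src d))) hE
        have hd' := mem_Ex.1 hd
        refine ⟨{d.1}, by simpa using hd'.1, ?_, by simp, ?_⟩
        · intro e he; rw [Finset.mem_singleton] at he; subst he
          exact ext d (by rw [hd'.2.1]; exact hd'.2.2.1.symm)
        · intro i hi ht
          by_cases hdi : cls (G.kind d) (h (G.dst d) - h (G.src d)) ≤ i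
          · have hdm : d ∈ G.Ex O r h i (r v) := mem_Ex.2 ⟨hd'.1, hd'.2.1, hd'.2.2.1, hdi⟩
            have : G.Ex (O \ {d.1}) r h i (r v) ⊆ (G.Ex O r h i (r v)).erase d := by
              intro x hx
              rw [Finset.mem_erase]
              refine ⟨?_, Ex_mono Finset.sdiff_subset r h i _ hx⟩
              rintro rfl; simp [mem_Ex] at hx
            have h1 := Finset.card_le_card this
            rw [Finset.card_erase_of_mem hdm] at h1
            have h2 := hF.ex (r v) hb i hi ht
            rw [hc1] at h2; omega
          · have : G.Ex (O \ {d.1}) r h i (r v) = ∅ := by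
              rw [Finset.eq_empty_iff_forall_notMem]
              intro x hx
              have hx' := mem_Ex.1 hx
              have := hmin x (mem_Ex.2 ⟨(Finset.mem_sdiff.1 hx'.1).1, hx'.2.1, hx'.2.2.1,
                cls_le_four _ _⟩)
              have := hx'.2.2.2
              omega
            simp [this]
      · refine ⟨∅, by simp, by simp, by simp, ?_⟩
        intro i hi ht
        rw [Finset.not_nonempty_iff_eq_empty] at hE
        have : G.Ex (O \ ∅) r h i (r v) = ∅ := by
          rw [Finset.eq_empty_iff_forall_notMem] at hE ⊢
          intro x hx
          rw [mem_Ex] at hx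
          exact hE x (mem_Ex.2 ⟨by simpa using hx.1, hx.2.1, hx.2.2.1, cls_le_four _ _⟩)
        rw [this]; simp
    obtain ⟨D, hD, h1, h2, h3⟩ := key
    refine ⟨D, hD, h1, h2, ?_, ?_⟩
    · intro c hc i hi ht
      by_cases hcv : c = r v
      · subst hcv; exact h3 i hi ht
      · rw [← hc2 c hcv]
        exact (Finset.card_le_card (Ex_mono Finset.sdiff_subset r h i c)).trans (hF.ex c hc i hi ht)
    · rw [← hc2 _ (Ne.symm hb)]
      exact (Finset.card_le_card (Bad_mono Finset.sdiff_subset r h)).trans hF.bd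

open Classical in
lemma kill_all (G : Gr E V) (r : V → V) (h : V → ℤ) (T : Multiset V) : ∀ (O : Finset E),
    G.Flags O r h T →
    ∃ D ⊆ O, (∀ e ∈ D, r (G.a e) ≠ r (G.b e)) ∧ D.card ≤ Multiset.card T ∧
      G.Flags (O \ D) r h 0 := by
  induction T using Multiset.induction with
  | empty => intro O hF; exact ⟨∅, by simp, by simp, by simp, hF.mono Finset.sdiff_subset⟩
  | cons v T ih =>
    intro O hF
    obtain ⟨D1, a1, a2, a3, a4⟩ := kill_one G O r h T v hF
    obtain ⟨D2, b1, b2, b3, b4⟩ := ih _ a4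
    refine ⟨D1 ∪ D2, Finset.union_subset a1 (b1.trans Finset.sdiff_subset), ?_, ?_, ?_⟩
    · intro e he
      rcases Finset.mem_union.1 he with he | he
      · exact a2 e he
      · exact b2 e he
    · have := Finset.card_union_le D1 D2
      simp; omega
    · exact b4.mono (by rw [Finset.sdiff_union_distrib, ← Finset.inf_eq_inter]; intro x; simp; tauto)

open Classical in
noncomputable def mr (r : V → V) (A B : V) (v : V) : V := if r v = A then B else r v

open Classical in
noncomputable def mh (r : V → V) (h : V → ℤ) (A : V) (x : ℤ) (v : V) : ℤ :=
  if r v = A then x else h v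

lemma mr_eq_other {r : V → V} {A B c v : V} (hcA : c ≠ A) (hcB : c ≠ B) :
    mr r A B v = c ↔ r v = c := by
  unfold mr; split_ifs with h
  · constructor
    · intro h'; exact absurd h'.symm hcB
    · intro h'; exact absurd (h'.symm.trans h) hcA
  · rfl

lemma mr_eq_B {r : V → V} {A B v : V} :
    mr r A B v = B ↔ r v = A ∨ r v = B := by
  unfold mr; split_ifs with h <;> simp [h]

lemma mr_ne_A {r : V → V} {A B v : V} (h : A ≠ B) : mr r A B v ≠ A := by
  unfold mr; split_ifs with h'
  · exact h.symm
  · exact h'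

lemma mr_coarse {r : V → V} (A B : V) {u v : V} (h : r u = r v) : mr r A B u = mr r A B v := by
  unfold mr; rw [h]

lemma cnt_other {r : V → V} {A B c : V} (hcA : c ≠ A) (hcB : c ≠ B) (T : Multiset V) :
    cnt (mr r A B) T c = cnt r T c := by
  classical
  unfold cnt
  exact Multiset.countP_congr rfl (fun v _ => by rw [mr_eq_other hcA hcB])

lemma cnt_B {r : V → V} {A B : V} (hAB : A ≠ B) (T : Multiset V) :
    cnt (mr r A B) T B = cnt r T A + cnt r T B := by
  classical
  induction T using Multiset.induction with
  | empty => simp [cnt]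
  | cons v T ih =>
    simp only [cnt, mr_eq_B, Multiset.countP_cons] at ih ⊢
    rw [ih]
    by_cases h1 : r v = A
    · have h2 : r v ≠ B := by rw [h1]; exact hAB
      simp [h1, hAB]; omega
    · simp [h1]; omega

lemma merge_step (G : Gr E V) (O : Finset E) (r : V → V) (h : V → ℤ) (T : Multiset V)
    (hB : G.Base r h) (hF : G.Flags O r h T) (d : E × Bool) (hd : d.1 ∈ O)
    (hAb : r (G.src d) ≠ r G.bot) (hBb : r (G.dst d) ≠ r G.bot)
    (hAB : r (G.src d) ≠ r (G.dst d)) (hAt : r (G.src d) ≠ r G.top)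
    (hΔ : h (G.dst d) = h (G.src d) ∨ h (G.dst d) = h (G.src d) + 1) :
    G.Base (mr r (r (G.src d)) (r (G.dst d))) (mh r h (r (G.src d)) (h (G.dst d))) ∧
    G.Flags O (mr r (r (G.src d)) (r (G.dst d))) (mh r h (r (G.src d)) (h (G.dst d)))
      (G.dst d ::ₘ G.dst d ::ₘ T) := by
  classical
  set A := r (G.src d) with hA
  set B := r (G.dst d) with hBd
  set r' := mr r A B with hr'
  set h' := mh r h A (h (G.dst d)) with hh'
  have r'bot : r' G.bot = r G.bot := by simp [hr', mr, hAb.symm]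
  have r'top : r' G.top = r G.top := by simp [hr', mr, hAt.symm]
  have hinA : ∀ v, r v = A → h v = h (G.src d) := fun v hv =>
    hB.hconst v _ hv (by rw [hv]; exact hAb)
  have hinB : ∀ v, r v = B → h v = h (G.dst d) := fun v hv =>
    hB.hconst v _ hv (by rw [hv]; exact hBb)
  have h'A : ∀ v, r v = A → h' v = h (G.dst d) := fun v hv => by simp [hh', mh, hv]
  have h'n : ∀ v, r v ≠ A → h' v = h v := fun v hv => by simp [hh', mh, hv]
  have hge : ∀ v, h v ≤ h' v := by
    intro v
    by_cases hv : r v = A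
    · rw [h'A v hv, hinA v hv]; omega
    · rw [h'n v hv]
  have hcb : ∀ c, c ≠ A → c ≠ B → cnt r' (G.dst d ::ₘ G.dst d ::ₘ T) c = cnt r T c := by
    intro c h1 h2
    rw [hr', cnt_other h1 h2]
    have : ¬ r (G.dst d) = c := fun h => h2 (h.symm)
    simp [cnt, this]
  have hcB : cnt r' (G.dst d ::ₘ G.dst d ::ₘ T) B = cnt r T A + cnt r T B + 2 := by
    rw [hr', cnt_B hAB]
    have h1 : ¬ r (G.dst d) = A := fun h => hAB (h.symm)
    have h2 : r (G.dst d) = B := rfl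
    unfold cnt
    simp only [Multiset.countP_cons, if_neg h1, if_pos h2]
    omega
  refine ⟨⟨?_, ?_, ?_, ?_, ?_, ?_⟩, ⟨?_, ?_⟩⟩
  · intro u v huv hub
    rw [r'bot] at hub
    by_cases hu : r' u = B
    · have h1 : ∀ w, r' w = B → h' w = h (G.dst d) := by
        intro w hw
        by_cases hwA : r w = A
        · exact h'A w hwA
        · rw [h'n w hwA]
          exact hinB w ((mr_eq_B.1 hw).resolve_left hwA)
      rw [h1 u hu, h1 v (huv ▸ hu)]
    · have hu' : r u ≠ A := fun hh => hu (mr_eq_B.2 (Or.inl hh))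
      have hv' : r v ≠ A := fun hh => hu (huv.trans (mr_eq_B.2 (Or.inl hh)))
      rw [h'n u hu', h'n v hv']
      have e1 : r' u = r u := by simp [hr', mr, hu']
      have e2 : r' v = r v := by simp [hr', mr, hv']
      exact hB.hconst u v (by rw [← e1, ← e2, huv]) (by rw [← e1]; exact hub)
  · rw [h'n _ hAb.symm]; exact hB.hbot
  · rw [h'n _ hAt.symm]; exact hB.htop
  · intro v hv; exact (hB.pos v hv).trans (hge v)
  · intro v
    by_cases hv : r v = A
    · rw [h'A v hv]; exact hB.le _
    · rw [h'n v hv]; exact hB.le _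
  · rw [r'bot, r'top]; exact hB.ne
  · intro c hc i hi ht
    rw [r'bot] at hc
    rw [r'top] at ht
    by_cases hcA : c = A
    · have : G.Ex O r' h' i c = ∅ := by
        rw [Finset.eq_empty_iff_forall_notMem]
        intro x hx
        rw [mem_Ex, hcA] at hx
        exact mr_ne_A hAB hx.2.1
      simp [this]
    by_cases hcB' : c = B
    · rw [hcB', hcB]
      rw [hcB'] at ht
      have hdA : ∀ i, cls (G.kind d) (h (G.dst d) - h (G.src d)) ≤ i → d ∈ G.Ex O r h i A :=
        fun i hi => mem_Ex.2 ⟨hd, rfl, hAB.symm, hi⟩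
      have hdB : ∀ i, cls (-G.kind d) (h (G.src d) - h (G.dst d)) ≤ i →
          rev d ∈ G.Ex O r h i B := by
        intro i hi
        refine mem_Ex.2 ⟨hd, by rw [src_rev], by rw [dst_rev]; exact hAB, by
          rw [src_rev, dst_rev, kind_rev]; exact hi⟩
      have EA := fun i hi => hF.ex A hAb i hi (fun h => absurd h hAt)
      have EB := hF.ex B hBb i hi ht
      -- decomposition
      have dec : ∀ x ∈ G.Ex O r' h' i B, (r (G.src x) = A ∧ r (G.dst x) ≠ A ∧ r (G.dst x) ≠ B ∧
          x.1 ∈ O ∧ cls (G.kind x) (h (G.dst x) - h (G.dst d)) ≤ i) ∨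
          (x ∈ G.Ex O r h i B ∧ x ≠ rev d) := by
        intro x hx
        rw [mem_Ex] at hx
        obtain ⟨x1, x2, x3, x4⟩ := hx
        have y3 : r (G.dst x) ≠ A ∧ r (G.dst x) ≠ B := by
          rw [← not_or, ← mr_eq_B]; exact x3
        rw [h'n _ y3.1] at x4
        rcases mr_eq_B.1 x2 with y2 | y2
        · left
          rw [h'A _ y2] at x4
          exact ⟨y2, y3.1, y3.2, x1, x4⟩
        · right
          rw [h'n _ (by rw [y2]; exact hAB.symm)] at x4
          refine ⟨mem_Ex.2 ⟨x1, y2, y3.2, x4⟩, ?_⟩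
          rintro rfl
          rw [dst_rev] at y3
          exact y3.1 rfl
      have notd : ∀ x : E × Bool, r (G.dst x) ≠ B → x ≠ d := by
        rintro x hx rfl; exact hx rfl
      rcases hΔ with hΔ | hΔ
      · -- level
        have sub : G.Ex O r' h' i B ⊆ (G.Ex O r h i A).erase d ∪ (G.Ex O r h i B).erase (rev d) := by
          intro x hx
          rw [Finset.mem_union, Finset.mem_erase, Finset.mem_erase]
          rcases dec x hx with ⟨y1, y2, y3, y4, y5⟩ | ⟨y1, y2⟩
          · left
            refine ⟨notd x y3, mem_Ex.2 ⟨y4, y1, y2, ?_⟩⟩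
            rw [hinA _ y1, ← hΔ]; exact y5
          · right; exact ⟨y2, y1⟩
        have c1 := (Finset.card_le_card sub).trans (Finset.card_union_le _ _)
        have EAi := EA i hi
        have z1 : ((G.Ex O r h i A).erase d).card + 1 ≤ i + cnt r T A ∨
          (((G.Ex O r h i A).erase d).card ≤ i + cnt r T A ∧
            ¬ cls (G.kind d) (h (G.dst d) - h (G.src d)) ≤ i) := by
          by_cases hh : cls (G.kind d) (h (G.dst d) - h (G.src d)) ≤ i
          · left; rw [Finset.card_erase_add_one (hdA i hh)]; exact EAi
          · right; exact ⟨(Finset.card_erase_le).trans EAi, hh⟩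
        have z2 : ((G.Ex O r h i B).erase (rev d)).card + 1 ≤ i + cnt r T B ∨
          (((G.Ex O r h i B).erase (rev d)).card ≤ i + cnt r T B ∧
            ¬ cls (-G.kind d) (h (G.src d) - h (G.dst d)) ≤ i) := by
          by_cases hh : cls (-G.kind d) (h (G.src d) - h (G.dst d)) ≤ i
          · left; rw [Finset.card_erase_add_one (hdB i hh)]; exact EB
          · right; exact ⟨(Finset.card_erase_le).trans EB, hh⟩
        rw [hΔ, sub_self] at z1 z2
        have z3 : cls (G.kind d) 0 ≤ 2 ∨ cls (-G.kind d) 0 ≤ 2 := by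
          unfold cls; split_ifs <;> omega
        have z4 := cls_le_four (G.kind d) 0
        have z5 := cls_le_four (-G.kind d) 0
        omega
      · by_cases hi0 : i = 0
        · subst hi0
          have sub : G.Ex O r' h' 0 B ⊆ (G.Ex O r h 2 A) ∪ (G.Ex O r h 0 B) := by
            intro x hx
            rw [Finset.mem_union]
            rcases dec x hx with ⟨y1, y2, y3, y4, y5⟩ | ⟨y1, y2⟩
            · left
              refine mem_Ex.2 ⟨y4, y1, y2, ?_⟩
              rw [hinA _ y1]
              rw [hΔ] at y5
              revert y5
              unfold cls; split_ifs <;> omega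
            · right; exact y1
          have c1 := (Finset.card_le_card sub).trans (Finset.card_union_le _ _)
          have := EA 2 (by norm_num)
          omega
        · have sub : G.Ex O r' h' i B ⊆
              (G.Ex O r h 4 A).erase d ∪ (G.Ex O r h i B).erase (rev d) := by
            intro x hx
            rw [Finset.mem_union, Finset.mem_erase, Finset.mem_erase]
            rcases dec x hx with ⟨y1, y2, y3, y4, y5⟩ | ⟨y1, y2⟩
            · left
              exact ⟨notd x y3, mem_Ex.2 ⟨y4, y1, y2, cls_le_four _ _⟩⟩
            · right; exact ⟨y2, y1⟩
          have c1 := (Finset.card_le_card sub).trans (Finset.card_union_le _ _)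
          rw [Finset.card_erase_of_mem (hdA 4 (cls_le_four _ _)),
            Finset.card_erase_of_mem (hdB i (by
              rw [hΔ]
              have : h (G.src d) - (h (G.src d) + 1) = -1 := by ring
              rw [this]
              unfold cls; split_ifs <;> omega))] at c1
          have := EA 4 (by norm_num)
          omega
    · rw [hcb c hcA hcB']
      refine (Finset.card_le_card ?_).trans (hF.ex c hc i hi ht)
      intro x hx
      rw [mem_Ex] at hx ⊢
      obtain ⟨x1, x2, x3, x4⟩ := hx
      rw [hr', mr_eq_other hcA hcB'] at x2
      rw [hr', Ne, mr_eq_other hcA hcB'] at x3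
      refine ⟨x1, x2, x3, (cls_mono _ ?_).trans x4⟩
      rw [h'n (G.src x) (by rw [x2]; exact hcA)]
      have := hge (G.dst x)
      omega
  · rw [r'bot, hcb _ hAb.symm hBb.symm]
    refine (Finset.card_le_card ?_).trans hF.bd
    intro x hx
    rw [mem_Bad] at hx ⊢
    obtain ⟨x1, x2, x3, x4⟩ := hx
    rw [r'bot, hr', mr_eq_other hAb.symm hBb.symm] at x2
    rw [r'bot, hr', Ne, mr_eq_other hAb.symm hBb.symm] at x3
    refine ⟨x1, x2, x3, ?_⟩
    unfold bad at x4 ⊢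
    rwa [h'n (G.src x) (by rw [x2]; exact hAb.symm)] at x4
structure P1 (G : Gr E V) (O : Finset E) (r : V → V) (h : V → ℤ) (k : ℕ) : Prop where
  base : G.Base r h
  ex : ∀ c, c ≠ r G.bot → ∀ i ≤ 4, (c = r G.top → i = 0) → (G.Ex O r h i c).card ≤ i
  bd : (G.Bad O r h).card ≤ 2 * k
  hk : ∀ d ∈ G.Bad O r h, h (G.src d) ≤ k

/-- no class-zero exits means neighbours are not too low -/
lemma P1.cls_pos {G : Gr E V} {O : Finset E} {r : V → V} {h : V → ℤ} {k : ℕ} (H : G.P1 O r h k)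
    (d : E × Bool) (hd : d.1 ∈ O) (h1 : r (G.src d) ≠ r G.bot) (h2 : r (G.dst d) ≠ r (G.src d)) :
    1 ≤ cls (G.kind d) (h (G.dst d) - h (G.src d)) := by
  by_contra hc
  have hm : d ∈ G.Ex O r h 0 (r (G.src d)) := mem_Ex.2 ⟨hd, rfl, h2, by omega⟩
  have := H.ex _ h1 0 (by norm_num) (fun _ => rfl)
  rw [Nat.le_zero, Finset.card_eq_zero] at this
  rw [this] at hm
  simp at hm

lemma cls_pos_ge {k x : ℤ} (h : 1 ≤ cls k x) : -1 ≤ x := by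
  revert h; unfold cls; split_ifs <;> omega

lemma ground_step (G : Gr E V) (O : Finset E) (r : V → V) (h : V → ℤ) (k : ℕ)
    (H : G.P1 O r h k) (hkn : (k : ℤ) + 1 < G.n) (d : E × Bool) (hd : d.1 ∈ O)
    (hs : r (G.src d) = r G.bot) (ht : r (G.dst d) ≠ r G.bot) :
    G.P1 O (mr r (r (G.dst d)) (r G.bot)) h (k + 1) := by
  classical
  set A := r (G.dst d) with hA
  set r' := mr r A (r G.bot) with hr'
  have r'bot : r' G.bot = r G.bot := by simp [hr', mr]
  have hcp : 1 ≤ cls (-G.kind d) (h (G.src d) - h (G.dst d)) := by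
    have := H.cls_pos (rev d) hd (by rw [src_rev]; exact ht) (by
      rw [src_rev, dst_rev, hs]; exact ht.symm)
    rwa [src_rev, dst_rev, kind_rev] at this
  have hlow : ¬ G.bad h d → h (G.dst d) ≤ 1 := by
    intro hb
    unfold bad at hb
    rw [not_not] at hb
    rcases hb with hb | ⟨hb1, hb2⟩
    · have := cls_pos_ge hcp
      rw [hb, H.base.hbot] at this
      omega
    · have : ¬ (h (G.src d) - h (G.dst d) ≤ -1) := by
        intro hh
        rw [hb1] at hcp
        simp [cls, hh] at hcp
      omega
  have hdk : h (G.dst d) ≤ k + 1 := by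
    by_cases hb : G.bad h d
    · have h1 := H.hk d (mem_Bad.2 ⟨hd, hs, ht, hb⟩)
      have := cls_pos_ge hcp
      omega
    · have := hlow hb; omega
  have hinA : ∀ v, r v = A → h v = h (G.dst d) := fun v hv =>
    H.base.hconst v _ hv (by rw [hv]; exact ht)
  have hAt : A ≠ r G.top := by
    intro hh
    have := hinA G.top hh.symm
    rw [H.base.htop] at this
    omega
  have r'top : r' G.top = r G.top := by simp [hr', mr, hAt.symm]
  have hnb : ∀ v, r' v ≠ r G.bot → r' v = r v := by
    intro v hv
    simp only [hr', mr] at hv ⊢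
    split_ifs with hh
    · simp [hh] at hv
    · rfl
  refine ⟨⟨?_, H.base.hbot, H.base.htop, H.base.pos, H.base.le, ?_⟩, ?_, ?_, ?_⟩
  · intro u v huv hub
    rw [r'bot] at hub
    have e1 := hnb u hub
    have e2 := hnb v (huv ▸ hub)
    exact H.base.hconst u v (by rw [← e1, ← e2, huv]) (by rw [← e1]; exact hub)
  · rw [r'bot, r'top]; exact H.base.ne
  · intro c hc i hi hct
    rw [r'bot] at hc
    rw [r'top] at hct
    by_cases hcA : c = A
    · have : G.Ex O r' h i c = ∅ := by
        rw [Finset.eq_empty_iff_forall_notMem]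
        intro x hx
        rw [mem_Ex, hcA] at hx
        exact mr_ne_A ht hx.2.1
      simp [this]
    · refine (Finset.card_le_card ?_).trans (H.ex c hc i hi hct)
      intro x hx
      rw [mem_Ex] at hx ⊢
      rwa [hr', mr_eq_other hcA hc, Ne, mr_eq_other hcA hc] at hx
  · have dec : ∀ x ∈ G.Bad O r' h, x ≠ rev d ∧ x ≠ d ∧ G.bad h x ∧ x.1 ∈ O ∧
        ((r (G.src x) = A ∧ r (G.dst x) ≠ A) ∨ x ∈ G.Bad O r h) := by
      intro x hx
      rw [mem_Bad, r'bot, hr', Ne, mr_eq_B, mr_eq_B, not_or] at hx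
      obtain ⟨x1, x2, ⟨x3, x4⟩, x5⟩ := hx
      refine ⟨?_, ?_, x5, x1, ?_⟩
      · rintro rfl; rw [dst_rev] at x4; exact x4 hs
      · rintro rfl; exact x3 rfl
      · rcases x2 with x2 | x2
        · left; exact ⟨x2, x3⟩
        · right; exact mem_Bad.2 ⟨x1, x2, x4, x5⟩
    have hrm : ∀ i, cls (-G.kind d) (h (G.src d) - h (G.dst d)) ≤ i → rev d ∈ G.Ex O r h i A := by
      intro i hi
      exact mem_Ex.2 ⟨hd, by rw [src_rev], by rw [dst_rev, hs]; exact ht.symm, by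
        rw [src_rev, dst_rev, kind_rev]; exact hi⟩
    have EA := fun i hi => H.ex A ht i hi (fun h => absurd h hAt)
    have hbd := H.bd
    by_cases hb : G.bad h d
    · have sub : G.Bad O r' h ⊆ (G.Ex O r h 4 A).erase (rev d) ∪ (G.Bad O r h).erase d := by
        intro x hx
        obtain ⟨y1, y2, y3, y4, y5⟩ := dec x hx
        rw [Finset.mem_union, Finset.mem_erase, Finset.mem_erase]
        rcases y5 with y5 | y5
        · left; exact ⟨y1, mem_Ex.2 ⟨y4, y5.1, y5.2, cls_le_four _ _⟩⟩
        · right; exact ⟨y2, y5⟩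
      have c1 := (Finset.card_le_card sub).trans (Finset.card_union_le _ _)
      rw [Finset.card_erase_of_mem (hrm 4 (cls_le_four _ _)),
        Finset.card_erase_of_mem (mem_Bad.2 ⟨hd, hs, ht, hb⟩)] at c1
      have := EA 4 (by norm_num)
      have : 0 < (G.Bad O r h).card := Finset.card_pos.2 ⟨d, mem_Bad.2 ⟨hd, hs, ht, hb⟩⟩
      omega
    · have hl := hlow hb
      have sub : G.Bad O r' h ⊆ (G.Ex O r h 3 A).erase (rev d) ∪ (G.Bad O r h) := by
        intro x hx
        obtain ⟨y1, y2, y3, y4, y5⟩ := dec x hx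
        rw [Finset.mem_union, Finset.mem_erase]
        rcases y5 with y5 | y5
        · left
          refine ⟨y1, mem_Ex.2 ⟨y4, y5.1, y5.2, ?_⟩⟩
          unfold bad at y3
          rw [not_or, hinA _ y5.1] at y3
          have y6 : G.kind x ≠ 1 := fun hh => y3.2 ⟨hh, hl⟩
          unfold cls; split_ifs <;> omega
        · right; exact y5
      have c1 := (Finset.card_le_card sub).trans (Finset.card_union_le _ _)
      have hk1 : -G.kind d ≠ 1 := by
        unfold bad at hb
        rw [not_not] at hb
        rcases hb with hb | hb
        · rw [G.kind_bot d hb]; norm_num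
        · rw [hb.1]; norm_num
      rw [Finset.card_erase_of_mem (hrm 3 (by unfold cls; split_ifs <;> omega))] at c1
      have := EA 3 (by norm_num)
      omega
  · intro x hx
    rw [mem_Bad, r'bot, hr', Ne, mr_eq_B, mr_eq_B, not_or] at hx
    obtain ⟨x1, x2, ⟨x3, x4⟩, x5⟩ := hx
    push_cast
    rcases x2 with x2 | x2
    · rw [hinA _ x2]; exact hdk
    · have := H.hk x (mem_Bad.2 ⟨x1, x2, x4, x5⟩)
      omega

open Classical in
noncomputable def Fx (G : Gr E V) (F : Finset E) (r : V → V) : Finset E :=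
  F.filter (fun e => r (G.a e) ≠ r (G.b e))

lemma mem_Fx {G : Gr E V} {F : Finset E} {r : V → V} {e : E} :
    e ∈ G.Fx F r ↔ e ∈ F ∧ r (G.a e) ≠ r (G.b e) := by simp [Fx]

lemma Fx_lt {G : Gr E V} {F : Finset E} {r r' : V → V} (hc : ∀ u v, r u = r v → r' u = r' v)
    {e : E} (he : e ∈ G.Fx F r) (he' : r' (G.a e) = r' (G.b e)) :
    (G.Fx F r').card < (G.Fx F r).card := by
  apply Finset.card_lt_card
  rw [Finset.ssubset_iff_of_subset]
  · exact ⟨e, he, fun h => (mem_Fx.1 h).2 he'⟩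
  · intro x hx
    rw [mem_Fx] at hx ⊢
    exact ⟨hx.1, fun h => hx.2 (hc _ _ h)⟩

lemma exists_dart {G : Gr E V} (e : E) (v : V → Prop) (h : v (G.a e) ∨ v (G.b e)) :
    ∃ d : E × Bool, d.1 = e ∧ v (G.src d) := by
  rcases h with h | h
  · exact ⟨(e, true), rfl, by simpa [src] using h⟩
  · exact ⟨(e, false), rfl, by simpa [src] using h⟩

lemma dart_eq {G : Gr E V} (d : E × Bool) (r : V → V) :
    (r (G.a d.1) = r (G.b d.1)) ↔ r (G.src d) = r (G.dst d) := by
  rcases d with ⟨e, _ | _⟩ <;> simp [src, dst, eq_comm]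

lemma phase1 (G : Gr E V) (O F : Finset E) (hFO : F ⊆ O) (h : V → ℤ) (hn : (F.card : ℤ) < G.n) :
    ∀ (N : ℕ) (r : V → V) (k : ℕ), (G.Fx F r).card = N → k + N ≤ F.card → G.P1 O r h k →
    ∃ r' k', (∀ u v, r u = r v → r' u = r' v) ∧ k' + (G.Fx F r').card ≤ F.card ∧ G.P1 O r' h k' ∧
      ∀ e ∈ G.Fx F r', r' (G.a e) ≠ r' G.bot ∧ r' (G.b e) ≠ r' G.bot := by
  intro N
  induction N using Nat.strong_induction_on with
  | _ N ih =>
    intro r k hN hk H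
    by_cases hex : ∃ e ∈ G.Fx F r, r (G.a e) = r G.bot ∨ r (G.b e) = r G.bot
    · obtain ⟨e, he, hb⟩ := hex
      obtain ⟨d, rfl, hd⟩ := exists_dart e (fun v => r v = r G.bot) hb
      have he' := mem_Fx.1 he
      have hne : r (G.dst d) ≠ r G.bot := by
        intro hh; exact he'.2 ((dart_eq d r).2 (hd.trans hh.symm))
      have hpos : 0 < N := by rw [← hN]; exact Finset.card_pos.2 ⟨_, he⟩
      have H' := ground_step G O r h k H (by omega) d (hFO he'.1) hd hne
      have hc : ∀ u v, r u = r v → mr r (r (G.dst d)) (r G.bot) u = mr r (r (G.dst d)) (r G.bot) v :=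
        fun u v huv => mr_coarse _ _ huv
      have hlt := Fx_lt (G := G) (F := F) hc he (by
        rw [dart_eq, mr_eq_B.2 (Or.inr hd), mr_eq_B.2 (Or.inl rfl)])
      rw [hN] at hlt
      obtain ⟨r', k', a1, a2, a3, a4⟩ := ih _ hlt _ (k + 1) rfl (by omega) H'
      exact ⟨r', k', fun u v huv => a1 _ _ (hc u v huv), a2, a3, a4⟩
    · push Not at hex
      exact ⟨r, k, fun _ _ h => h, by omega, H, hex⟩

lemma phase2 (G : Gr E V) (O F : Finset E) (hFO : F ⊆ O) :
    ∀ (N : ℕ) (r : V → V) (h : V → ℤ) (T : Multiset V), (G.Fx F r).card = N →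
    Multiset.card T + 2 * N ≤ 2 * F.card → G.Base r h → G.Flags O r h T →
    (∀ e ∈ G.Fx F r, r (G.a e) ≠ r G.bot ∧ r (G.b e) ≠ r G.bot) →
    (∀ e ∈ G.Fx F r, h (G.a e) - h (G.b e) ≤ 1 ∧ h (G.b e) - h (G.a e) ≤ 1) →
    ∃ r' h' T', (∀ u v, r u = r v → r' u = r' v) ∧ Multiset.card T' ≤ 2 * F.card ∧
      G.Base r' h' ∧ G.Flags O r' h' T' ∧ ∀ e ∈ F, r' (G.a e) = r' (G.b e) := by
  intro N
  induction N using Nat.strong_induction_on with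
  | _ N ih =>
    intro r h T hN hT hB hF hnb hL
    by_cases hE : (G.Fx F r).Nonempty
    · obtain ⟨e, he, hmin⟩ := Finset.exists_min_image _ (fun e => min (h (G.a e)) (h (G.b e))) hE
      have he' := mem_Fx.1 he
      -- choose the dart
      have hdart : ∃ d : E × Bool, d.1 = e ∧ r (G.src d) ≠ r G.top ∧
          (h (G.dst d) = h (G.src d) ∨ h (G.dst d) = h (G.src d) + 1) := by
        have hLe := hL e he
        have hnbe := hnb e he
        have htop : ∀ v, r v = r G.top → h v = G.n := by
          intro v hv
          rw [hB.hconst v G.top hv (by rw [hv]; exact hB.ne.symm), hB.htop]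
        have la := hB.le (G.a e)
        have lb := hB.le (G.b e)
        by_cases h1 : h (G.a e) < h (G.b e) ∨ (h (G.a e) = h (G.b e) ∧ r (G.a e) ≠ r G.top)
        · refine ⟨(e, true), rfl, ?_, ?_⟩
          · simp only [src, if_true]
            intro hh
            have := htop _ hh
            rcases h1 with h1 | h1
            · omega
            · exact h1.2 hh
          · simp only [src, dst, if_true]; omega
        · refine ⟨(e, false), rfl, ?_, ?_⟩
          · simp only [src, Bool.false_eq_true, if_false]
            intro hh
            have := htop _ hh
            by_cases h2 : h (G.a e) = h (G.b e)
            · apply h1; right; refine ⟨h2, ?_⟩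
              rw [← hh]; exact he'.2
            · omega
          · simp only [src, dst, Bool.false_eq_true, if_false]; omega
      obtain ⟨d, rfl, hdt, hdΔ⟩ := hdart
      have hdb : r (G.src d) ≠ r G.bot ∧ r (G.dst d) ≠ r G.bot := by
        have := hnb _ he
        rcases d with ⟨e, _ | _⟩ <;> simpa [src, dst, and_comm] using this
      have hdne : r (G.src d) ≠ r (G.dst d) := fun hh => he'.2 ((dart_eq d r).2 hh)
      obtain ⟨B', F'⟩ := merge_step G O r h T hB hF d (hFO he'.1) hdb.1 hdb.2 hdne hdt hdΔ
      set r' := mr r (r (G.src d)) (r (G.dst d)) with hr'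
      set h' := mh r h (r (G.src d)) (h (G.dst d)) with hh'
      have hc : ∀ u v, r u = r v → r' u = r' v := fun u v huv => mr_coarse _ _ huv
      have hlt := Fx_lt (G := G) (F := F) hc he (by
        rw [dart_eq, hr', mr_eq_B.2 (Or.inr rfl), mr_eq_B.2 (Or.inl rfl)])
      rw [hN] at hlt
      have r'bot : r' G.bot = r G.bot := by simp [hr', mr, hdb.1.symm]
      have hsub : ∀ e ∈ G.Fx F r', e ∈ G.Fx F r := by
        intro x hx
        rw [mem_Fx] at hx ⊢
        exact ⟨hx.1, fun h => hx.2 (hc _ _ h)⟩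
      obtain ⟨r2, h2, T2, a1, a2, a3, a4, a5⟩ := ih _ hlt r' h' _ rfl (by simp; omega) B' F' (by
        intro x hx
        have := hnb x (hsub x hx)
        rw [r'bot, hr', Ne, Ne, mr_eq_other hdb.1.symm hdb.2.symm,
          mr_eq_other hdb.1.symm hdb.2.symm]
        exact this) (by
        intro x hx
        have hx' := hsub x hx
        have m1 := hmin x hx'
        have m2 := hL x hx'
        have m3 := hL _ he
        have hinA : ∀ v, r v = r (G.src d) → h v = h (G.src d) := fun v hv =>
          hB.hconst v _ hv (by rw [hv]; exact hdb.1)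
        have hm : min (h (G.a d.1)) (h (G.b d.1)) = h (G.src d) := by
          rcases d with ⟨e, _ | _⟩
          · simp [src, dst] at hdΔ ⊢; omega
          · simp [src, dst] at hdΔ ⊢; omega
        rw [hm] at m1
        have xne := (mem_Fx.1 hx').2
        simp only [hh', mh]
        split_ifs with q1 q2 q2
        · omega
        · have := hinA _ q1; omega
        · have := hinA _ q2; omega
        · omega)
      exact ⟨r2, h2, T2, fun u v huv => a1 _ _ (hc u v huv), a2, a3, a4, a5⟩
    · rw [Finset.not_nonempty_iff_eq_empty] at hE
      refine ⟨r, h, T, fun _ _ h => h, by omega, hB, hF, ?_⟩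
      intro e he
      by_contra hh
      have : e ∈ G.Fx F r := mem_Fx.2 ⟨he, hh⟩
      rw [hE] at this
      simp at this

open Classical in
lemma main_step (G : Gr E V) (O F : Finset E) (hFO : F ⊆ O) (hn : (F.card : ℤ) < G.n)
    (r : V → V) (h : V → ℤ) (hB : G.Base r h) (hF : G.Flags O r h 0) :
    ∃ r' h', ∃ D ⊆ O, D.card ≤ 2 * F.card ∧ (∀ e ∈ D, r' (G.a e) ≠ r' (G.b e)) ∧
      (∀ u v, r u = r v → r' u = r' v) ∧ (∀ e ∈ F, r' (G.a e) = r' (G.b e)) ∧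
      G.Base r' h' ∧ G.Flags (O \ D) r' h' 0 := by
  have c0 : ∀ c, cnt r 0 c = 0 := fun c => by simp [cnt]
  have hbe : G.Bad O r h = ∅ := by
    have := hF.bd; rw [c0, Nat.le_zero, Finset.card_eq_zero] at this; exact this
  have H0 : G.P1 O r h 0 := ⟨hB, fun c hc i hi ht => by
      have := hF.ex c hc i hi ht; rwa [c0] at this, by simp [hbe], by simp [hbe]⟩
  obtain ⟨r1, k, a1, a2, a3, a4⟩ := phase1 G O F hFO h hn _ r 0 rfl (by
    rw [zero_add]; exact Finset.card_le_card (Finset.filter_subset _ _)) H0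
  have F1 : G.Flags O r1 h (Multiset.replicate (2 * k) G.bot) := by
    refine ⟨fun c hc i hi ht => (a3.ex c hc i hi ht).trans (by omega), a3.bd.trans ?_⟩
    unfold cnt
    rw [Multiset.countP_eq_card.2]
    · simp
    · intro v hv; rw [Multiset.eq_of_mem_replicate hv]
  obtain ⟨r2, h2, T, b1, b2, b3, b4, b5⟩ := phase2 G O F hFO _ r1 h _ rfl (by
      simp; omega) a3.base F1 a4 (by
    intro e he
    have hx := a4 e he
    have he' := mem_Fx.1 he
    have p1 := a3.cls_pos (e, true) (hFO he'.1) (by simpa [src] using hx.1)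
      (by simpa [src, dst] using he'.2.symm)
    have p2 := a3.cls_pos (e, false) (hFO he'.1) (by simpa [src] using hx.2)
      (by simpa [src, dst] using he'.2)
    have q1 := cls_pos_ge p1
    have q2 := cls_pos_ge p2
    simp [src, dst] at q1 q2
    omega)
  obtain ⟨D, d1, d2, d3, d4⟩ := kill_all G r2 h2 T O b4
  exact ⟨r2, h2, D, d1, d3.trans b2, d2, fun u v huv => b1 _ _ (a1 _ _ huv), b5, b3, d4⟩
end Gr

def fc (n : ℕ) (v : Vtx) : Vtx :=
  if v.2 ≤ 0 then (0, 0) else if (n : ℤ) ≤ v.2 then (0, (n : ℤ)) else v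

def ga (n : ℕ) (e : Edge) : Vtx := if e.2 then fc n (e.1.1, e.1.2 - 1) else fc n (e.1.1 - 1, e.1.2)
def gb (n : ℕ) (e : Edge) : Vtx := fc n e.1

open Classical in
noncomputable def GG (n : ℕ) : Gr Edge Vtx where
  a := ga n
  b := gb n
  kd := fun e => if ga n e = (0, 0) ∨ gb n e = (0, 0) then 0 else if e.2 then 0 else 1
  bot := (0, 0)
  top := (0, (n : ℤ))
  n := n
  kbot := by intro e he; rw [if_pos he]

noncomputable def SB (m n : ℕ) : Finset Edge :=
  ((Finset.Icc (1 : ℤ) (m - 1) ×ˢ Finset.Icc (1 : ℤ) n) ×ˢ {true}) ∪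
  ((Finset.Icc (2 : ℤ) (m - 1) ×ˢ Finset.Icc (1 : ℤ) (n - 1)) ×ˢ {false})

lemma mem_SB_true {m n : ℕ} {x y : ℤ} :
    ((x, y), true) ∈ SB m n ↔ (1 ≤ x ∧ x ≤ m - 1) ∧ 1 ≤ y ∧ y ≤ n := by
  simp [SB]
lemma mem_SB_false {m n : ℕ} {x y : ℤ} :
    ((x, y), false) ∈ SB m n ↔ (2 ≤ x ∧ x ≤ m - 1) ∧ 1 ≤ y ∧ y ≤ n - 1 := by
  simp [SB]

def h0 (n : ℕ) (v : Vtx) : ℤ := if v = (0, 0) then 0 else max 1 (min n v.2)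

lemma base0 (n : ℕ) (hn : 2 ≤ n) : (GG n).Base id (h0 n) := by
  refine ⟨fun u v h _ => by simp at h; rw [h], ?_, ?_, ?_, ?_, ?_⟩
  · simp [GG, h0]
  · simp [GG, h0]; omega
  · intro v hv; simp [GG] at hv; simp [h0, hv]
  · intro v; unfold h0; simp only [GG]; split_ifs <;> omega
  · simp [GG]; omega

lemma h0_fc (n : ℕ) (hn : 2 ≤ n) (x y : ℤ) (h1 : 0 ≤ y) (h2 : y ≤ n) : h0 n (fc n (x, y)) = y := by
  unfold h0 fc
  simp only
  split_ifs with a b c d b <;> simp_all <;> omega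

lemma fc_eq {n : ℕ} {v c : Vtx} (h : fc n v = c) (hb : c ≠ (0, 0)) (ht : c ≠ (0, (n : ℤ))) :
    v = c ∧ 1 ≤ c.2 ∧ c.2 ≤ n - 1 := by
  unfold fc at h
  split_ifs at h with a b
  · exact absurd h.symm hb
  · exact absurd h.symm ht
  · subst h; exact ⟨rfl, by omega, by omega⟩

lemma kd_true (n : ℕ) (v : Vtx) : (GG n).kd (v, true) = 0 := by
  simp [GG]

lemma kd_false (n : ℕ) (x y : ℤ) (h1 : 1 ≤ y) (h2 : y ≤ n - 1) :
    (GG n).kd ((x, y), false) = 1 := by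
  have a : ¬ y ≤ 0 := by omega
  have b : ¬ (n : ℤ) ≤ y := by omega
  simp [GG, ga, gb, fc, a, b]; omega

lemma dart_cls (m n : ℕ) (hn : 2 ≤ n) (d : Edge × Bool) (hd : d.1 ∈ SB m n) (c : Vtx)
    (hs : (GG n).src d = c) (hb : c ≠ (0, 0)) (ht : c ≠ (0, (n : ℤ))) :
    let k := cls ((GG n).kind d) (h0 n ((GG n).dst d) - h0 n ((GG n).src d))
    (k = 1 ∧ d = ((c, true), false)) ∨ (k = 2 ∧ d = ((c, false), false)) ∨
    (k = 3 ∧ d = (((c.1, c.2 + 1), true), true)) ∨ (k = 4 ∧ d = (((c.1 + 1, c.2), false), true)) := by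
  intro k
  obtain ⟨⟨⟨x, y⟩, tf⟩, b⟩ := d
  have e1 : ∀ u v : ℤ, 0 ≤ v → v ≤ (n : ℤ) → h0 n (fc n (u, v)) = v := fun u v => h0_fc n hn u v
  rcases tf with _ | _ <;> rcases b with _ | _
  · right; left
    have := fc_eq (n := n) (v := (x, y)) (c := c) (by simpa [Gr.src, GG, gb] using hs) hb ht
    obtain ⟨rfl, h1, h2⟩ := this
    simp only at h1 h2
    refine ⟨?_, rfl⟩
    have hk := kd_false n x y h1 h2
    have ea := e1 (x - 1) y (by omega) (by omega)
    have eb := e1 x y (by omega) (by omega)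
    simp only [k, Gr.kind, hk, Gr.src, Gr.dst]
    simp [GG, ga, gb, ea, eb, cls]
  · right; right; right
    have := fc_eq (n := n) (v := (x - 1, y)) (c := c) (by simpa [Gr.src, GG, ga] using hs) hb ht
    obtain ⟨rfl, h1, h2⟩ := this
    simp only at h1 h2
    refine ⟨?_, by simp⟩
    have hk := kd_false n x y h1 h2
    have ea := e1 (x - 1) y (by omega) (by omega)
    have eb := e1 x y (by omega) (by omega)
    simp only [k, Gr.kind, hk, Gr.src, Gr.dst]
    simp [GG, ga, gb, ea, eb, cls]
  · left
    have := fc_eq (n := n) (v := (x, y)) (c := c) (by simpa [Gr.src, GG, gb] using hs) hb ht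
    obtain ⟨rfl, h1, h2⟩ := this
    simp only at h1 h2
    refine ⟨?_, rfl⟩
    have hk := kd_true n (x, y)
    have ea := e1 x (y - 1) (by omega) (by omega)
    have eb := e1 x y (by omega) (by omega)
    simp only [k, Gr.kind, hk, Gr.src, Gr.dst]
    simp [GG, ga, gb, ea, eb, cls]
  · right; right; left
    have := fc_eq (n := n) (v := (x, y - 1)) (c := c) (by simpa [Gr.src, GG, ga] using hs) hb ht
    obtain ⟨rfl, h1, h2⟩ := this
    simp only at h1 h2
    refine ⟨?_, by simp⟩
    have hk := kd_true n (x, y)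
    have ea := e1 x (y - 1) (by omega) (by omega)
    have eb := e1 x y (by omega) (by omega)
    simp only [k, Gr.kind, hk, Gr.src, Gr.dst]
    simp [GG, ga, gb, ea, eb, cls]

lemma flags0 (m n : ℕ) (hn : 2 ≤ n) : (GG n).Flags (SB m n) id (h0 n) 0 := by
  constructor
  · intro c hc i hi ht
    refine le_trans ?_ (Nat.le_add_right _ _)
    by_cases hct : c = (0, (n : ℤ))
    · have hi0 := ht (by simpa [GG] using hct)
      subst hi0
      rw [Nat.le_zero, Finset.card_eq_zero, Finset.eq_empty_iff_forall_notMem]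
      rintro ⟨⟨⟨x, y⟩, tf⟩, b⟩ hd
      rw [Gr.mem_Ex] at hd
      obtain ⟨g1, g2, g3, g4⟩ := hd
      have e1 : ∀ u v : ℤ, 0 ≤ v → v ≤ (n : ℤ) → h0 n (fc n (u, v)) = v := fun u v => h0_fc n hn u v
      have hcn : h0 n c = n := by rw [hct]; simpa [h0] using by omega
      simp only [id] at g2
      rw [g2, hcn] at g4
      have hs : h0 n ((GG n).src (((x, y), tf), b)) = n := by rw [g2, hcn]
      rcases tf with _ | _ <;> rcases b with _ | _
      · have := mem_SB_false.1 g1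
        simp [Gr.src, GG, ga, gb, e1 x y (by omega) (by omega)] at hs
        omega
      · have := mem_SB_false.1 g1
        simp [Gr.src, GG, ga, gb, e1 (x - 1) y (by omega) (by omega)] at hs
        omega
      · have := mem_SB_true.1 g1
        simp only [Gr.kind, kd_true] at g4
        simp [Gr.src, GG, ga, gb, e1 x y (by omega) (by omega)] at hs
        simp [Gr.dst, GG, ga, e1 x (y - 1) (by omega) (by omega), cls] at g4
        subst hs
        simp at g4
        linarith
      · have := mem_SB_true.1 g1
        simp [Gr.src, GG, ga, gb, e1 x (y - 1) (by omega) (by omega)] at hs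
        omega
    · have hcb : c ≠ (0, 0) := by simpa [GG] using hc
      have := Finset.card_le_card_of_injOn (s := (GG n).Ex (SB m n) id (h0 n) i c)
        (t := Finset.Icc 1 i)
        (fun d => cls ((GG n).kind d) (h0 n ((GG n).dst d) - h0 n ((GG n).src d))) (by
          intro d hd
          have hd' := Gr.mem_Ex.1 (Finset.mem_coe.1 hd)
          have := dart_cls m n hn d hd'.1 c hd'.2.1 hcb hct
          simp only at this
          have h4 := hd'.2.2.2
          simp only [Finset.coe_Icc, Set.mem_Icc]
          omega) (by
          intro d hd d' hd' he
          have k := Gr.mem_Ex.1 (Finset.mem_coe.1 hd)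
          have k' := Gr.mem_Ex.1 (Finset.mem_coe.1 hd')
          have w := dart_cls m n hn d k.1 c k.2.1 hcb hct
          have w' := dart_cls m n hn d' k'.1 c k'.2.1 hcb hct
          simp only at w w' he
          rw [he] at w
          rcases w with w | w | w | w <;> rcases w' with w' | w' | w' | w' <;>
            first
            | (exfalso; omega)
            | (rw [w.2, w'.2]))
      simpa using this
  · refine le_trans ?_ (Nat.zero_le _)
    rw [Nat.le_zero, Finset.card_eq_zero, Finset.eq_empty_iff_forall_notMem]
    intro d hd
    rw [Gr.mem_Bad] at hd
    exact hd.2.2.2 (Or.inl hd.2.1)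

open Classical in
def Inv (m n : ℕ) (M B : Finset Edge) : Prop :=
  ∃ r h, (GG n).Base r h ∧ (GG n).Flags (SB m n \ M) r h 0 ∧
    ∀ e ∈ B, e ∈ SB m n → r (ga n e) = r (gb n e)

lemma Inv.mono {m n : ℕ} {M M' B : Finset Edge} (h : Inv m n M B) (hM : M ⊆ M') :
    Inv m n M' B := by
  classical
  obtain ⟨r, h, h1, h2, h3⟩ := h
  exact ⟨r, h, h1, h2.mono (Finset.sdiff_subset_sdiff (Finset.Subset.refl _) hM), h3⟩

lemma inv0 (m n : ℕ) (hn : 2 ≤ n) : Inv m n ∅ ∅ :=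
  ⟨id, h0 n, base0 n hn, by simpa using flags0 m n hn, by simp⟩

lemma Inv.step {m n : ℕ} {M B F : Finset Edge} (H : Inv m n M B) (hFM : Disjoint F M)
    (hF : F.card < n) :
    ∃ D ⊆ SB m n, Disjoint D M ∧ Disjoint D B ∧ Disjoint D F ∧ D.card ≤ 2 * F.card ∧
      Inv m n (M ∪ D) (B ∪ F) := by
  classical
  obtain ⟨r, h, h1, h2, h3⟩ := H
  have hc : (F ∩ SB m n).card ≤ F.card := Finset.card_le_card Finset.inter_subset_left
  obtain ⟨r', h', D, hD, hDc, hDe, hco, hFi, hB', hF'⟩ := (GG n).main_step (SB m n \ M) (F ∩ SB m n) (by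
    intro e he
    rw [Finset.mem_inter] at he
    rw [Finset.mem_sdiff]
    exact ⟨he.2, Finset.disjoint_left.1 hFM he.1⟩) (by simp only [GG]; omega) r h h1 h2
  have hin : ∀ e ∈ B ∪ F, e ∈ SB m n → r' (ga n e) = r' (gb n e) := by
    intro e he hs
    rcases Finset.mem_union.1 he with he | he
    · exact hco _ _ (h3 e he hs)
    · exact hFi e (Finset.mem_inter.2 ⟨he, hs⟩)
  have hDS : D ⊆ SB m n := fun e he => (Finset.mem_sdiff.1 (hD he)).1
  refine ⟨D, hDS, ?_, ?_, ?_, by omega, r', h', hB', ?_, hin⟩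
  · rw [Finset.disjoint_left]; intro e he; exact (Finset.mem_sdiff.1 (hD he)).2
  · rw [Finset.disjoint_left]; intro e he hb
    exact hDe e he (hin e (Finset.mem_union_left _ hb) (hDS he))
  · rw [Finset.disjoint_left]; intro e he hb
    exact hDe e he (hin e (Finset.mem_union_right _ hb) (hDS he))
  · have : SB m n \ (M ∪ D) = (SB m n \ M) \ D := by
      ext e; simp only [Finset.mem_sdiff, Finset.mem_union]; tauto
    rw [this]; convert hF'
def RR (m n : ℕ) (M : Set Edge) (u v : Vtx) : Prop :=
  u ∈ lamVtx m n ∧ v ∈ lamVtx m n ∧ ∃ e ∈ M, joins e u v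

lemma RR.symm {m n : ℕ} {M : Set Edge} {u v : Vtx} (h : RR m n M u v) : RR m n M v u := by
  obtain ⟨a, b, e, he, hj⟩ := h
  exact ⟨b, a, e, he, Or.symm hj⟩

lemma list_of_reach {m n : ℕ} {M : Set Edge} {u v : Vtx} (hv : v ∈ lamVtx m n)
    (h : Relation.ReflTransGen (RR m n M) u v) :
    ∃ l : List Vtx, l.head? = some u ∧ l.getLast? = some v ∧ (∀ w ∈ l, w ∈ lamVtx m n) ∧
      ∀ p ∈ cp l, ∃ e ∈ M, joins e p.1 p.2 := by
  induction h using Relation.ReflTransGen.head_induction_on with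
  | refl => exact ⟨[v], rfl, rfl, by simpa using hv, by simp [cp]⟩
  | @head a c hac _ ih =>
    obtain ⟨l, h1, h2, h3, h4⟩ := ih
    cases l with
    | nil => simp at h1
    | cons b t =>
      simp at h1
      subst h1
      refine ⟨a :: b :: t, rfl, by rw [List.getLast?_cons_cons]; exact h2, ?_, ?_⟩
      · intro w hw
        rcases List.mem_cons.1 hw with rfl | hw
        · exact hac.1
        · exact h3 w hw
      · intro p hp
        have : cp (a :: b :: t) = (a, b) :: cp (b :: t) := by simp [cp]
        rw [this] at hp
        rcases List.mem_cons.1 hp with rfl | hp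
        · exact hac.2.2
        · exact h4 p hp

lemma tele (f : ℕ → ZMod 2) (n : ℕ) :
    ∑ j ∈ Finset.range n, (f j + f (j + 1)) = f 0 + f n := by
  induction n with
  | zero => simp [CharTwo.add_self_eq_zero]
  | succ n ih =>
    rw [Finset.sum_range_succ, ih]
    have := CharTwo.add_self_eq_zero (f n)
    linear_combination this

def WW (m n : ℕ) (M : Set Edge) (v : Vtx) : Prop :=
  ∃ u, u.1 = 1 ∧ Relation.ReflTransGen (RR m n M) u v

lemma WW.iff {m n : ℕ} {M : Set Edge} {u v : Vtx} (h : RR m n M u v) :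
    WW m n M u ↔ WW m n M v :=
  ⟨fun ⟨a, b, c⟩ => ⟨a, b, c.tail h⟩, fun ⟨a, b, c⟩ => ⟨a, b, c.tail h.symm⟩⟩

lemma parity_crossing (m n : ℕ) (hn : 1 ≤ n) (hm : 2 ≤ m) (M : Set Edge) (g : ℤ → ℤ → ZMod 2)
    (g0 : ∀ x, g x 0 = 0) (gn : ∀ x, g x n = 1)
    (hR : ∀ x y : ℤ, ((x, y), true) ∈ SB m n → g x (y - 1) + g x y ≠ 0 → ((x, y), true) ∈ M)
    (hV : ∀ x y : ℤ, ((x, y), false) ∈ SB m n → g (x - 1) y + g x y ≠ 0 → ((x, y), false) ∈ M) :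
    HasCrossing m n M := by
  classical
  set w : ℤ → ℤ → ZMod 2 := fun x y => if WW m n M (x, y) then 1 else 0 with hw
  have wiff : ∀ x y x' y', RR m n M (x, y) (x', y') → w x y = w x' y' := by
    intro x y x' y' h
    simp only [hw, WW.iff h]
  have rR : ∀ x y : ℤ, 1 ≤ x → x ≤ m - 1 → 1 ≤ y → y ≤ n → g x (y - 1) + g x y ≠ 0 →
      RR m n M (x, y) (x + 1, y) := by
    intro x y h1 h2 h3 h4 h5
    refine ⟨?_, ?_, _, hR x y (mem_SB_true.2 ⟨⟨h1, h2⟩, h3, h4⟩) h5, Or.inl ⟨rfl, by simp [ends]⟩⟩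
    · simp only [lamVtx, Set.mem_ofPred_eq]; omega
    · simp only [lamVtx, Set.mem_ofPred_eq]; omega
  have rV : ∀ x y : ℤ, 2 ≤ x → x ≤ m - 1 → 1 ≤ y → y ≤ n - 1 → g (x - 1) y + g x y ≠ 0 →
      RR m n M (x, y) (x, y + 1) := by
    intro x y h1 h2 h3 h4 h5
    refine ⟨?_, ?_, _, hV x y (mem_SB_false.2 ⟨⟨h1, h2⟩, h3, h4⟩) h5, Or.inl ⟨rfl, by simp [ends]⟩⟩
    · simp only [lamVtx, Set.mem_ofPred_eq]; omega
    · simp only [lamVtx, Set.mem_ofPred_eq]; omega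
  have key : ∀ k : ℕ, k + 2 ≤ m →
      ∑ j ∈ Finset.range n, w (k + 1) (j + 1) * (g (k + 1) j + g (k + 1) (j + 1)) = 1 := by
    intro k
    induction k with
    | zero =>
      intro _
      have hw1 : ∀ y, w 1 y = 1 := by
        intro y
        simp only [hw]
        rw [if_pos]
        exact ⟨_, rfl, Relation.ReflTransGen.refl⟩
      have := tele (fun j => g 1 j) n
      simp only [Nat.cast_zero, zero_add, hw1, one_mul]
      push_cast at this
      rw [this, g0, gn, zero_add]
    | succ k ih =>
      intro hk
      have ih := ih (by omega)
      have e1 : ∑ j ∈ Finset.range n, w (k + 1) (j + 1) * (g (k + 1) j + g (k + 1) (j + 1)) =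
          ∑ j ∈ Finset.range n, w (k + 2) (j + 1) * (g (k + 1) j + g (k + 1) (j + 1)) := by
        refine Finset.sum_congr rfl fun j hj => ?_
        have hj := Finset.mem_range.1 hj
        by_cases hz : g (k + 1) j + g (k + 1) (j + 1) = 0
        · rw [hz, mul_zero, mul_zero]
        · have := rR (k + 1) (j + 1) (by omega) (by omega) (by omega) (by omega)
            (by rw [add_sub_cancel_right]; exact hz)
          rw [wiff _ _ _ _ this]
          rw [show (k : ℤ) + 1 + 1 = k + 2 by ring]
      set v : ℕ → ZMod 2 := fun j => g (k + 1) j + g (k + 2) j with hv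
      have hvw : ∀ j ∈ Finset.range n, w (k + 2) (j + 1) * v j = w (k + 2) j * v j := by
        intro j hj
        have hj := Finset.mem_range.1 hj
        by_cases hz : v j = 0
        · rw [hz, mul_zero, mul_zero]
        · have hj0 : j ≠ 0 := by
            rintro rfl
            apply hz; simp [hv, g0]
          have := rV (k + 2) j (by omega) (by omega) (by omega) (by omega) (by
            have : (k : ℤ) + 2 - 1 = k + 1 := by ring
            rw [this]; exact hz)
          rw [wiff _ _ _ _ this]
      have e2 : ∑ j ∈ Finset.range n, w (k + 2) (j + 1) * (v j + v (j + 1)) = 0 := by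
        have t := tele (fun j => w (k + 2) j * v j) n
        have z : v 0 = 0 := by simp [hv, g0]
        have z' : v n = 0 := by simp [hv, gn, CharTwo.add_self_eq_zero]
        simp only [z, z', mul_zero, add_zero] at t
        rw [← t]
        refine Finset.sum_congr rfl fun j hj => ?_
        rw [mul_add, hvw j hj]; push_cast; rfl
      rw [e1] at ih
      have e3 : ((k + 1 : ℕ) : ℤ) + 1 = k + 2 := by push_cast; ring
      rw [e3]
      rw [← ih, ← sub_eq_zero, ← Finset.sum_sub_distrib, ← e2]
      refine Finset.sum_congr rfl fun j _ => ?_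
      simp only [hv]
      push_cast
      have c1 := CharTwo.add_self_eq_zero (w (k + 2) (j + 1) * (g (k + 1) j + g (k + 1) (j + 1)))
      linear_combination -c1
  have := key (m - 2) (by omega)
  have hmm : ((m - 2 : ℕ) : ℤ) + 1 = m - 1 := by omega
  rw [hmm] at this
  obtain ⟨j, hj, hne⟩ := Finset.exists_ne_zero_of_sum_ne_zero (by rw [this]; exact one_ne_zero)
  have hj := Finset.mem_range.1 hj
  have a1 := left_ne_zero_of_mul hne
  have a2 := right_ne_zero_of_mul hne
  have r := rR (m - 1) (j + 1) (by omega) (by omega) (by omega) (by omega)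
            (by rw [add_sub_cancel_right]; exact a2)
  have hW : WW m n M (m - 1, j + 1) := by
    by_contra hh
    apply a1; simp only [hw]; rw [if_neg hh]
  obtain ⟨u, hu, hre⟩ := (WW.iff r).1 hW
  obtain ⟨l, l1, l2, l3, l4⟩ := list_of_reach r.2.1 hre
  exact ⟨l, ⟨u, l1, hu⟩, ⟨_, l2, by simp⟩, l3, l4⟩

lemma Inv.crossing {m n : ℕ} {M B : Finset Edge} (hm : 1 ≤ m) (hn : 1 ≤ n) (H : Inv m n M B)
    (hall : ∀ e ∈ SB m n, e ∈ M ∨ e ∈ B) : HasCrossing m n (↑M : Set Edge) := by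
  classical
  rcases Nat.lt_or_ge m 2 with h | h
  · have : m = 1 := by omega
    subst this
    exact ⟨[(1, 1)], ⟨_, rfl, rfl⟩, ⟨_, rfl, by simp⟩, by simp [lamVtx]; omega, by simp [cp]⟩
  obtain ⟨r, h', hB, -, hi⟩ := H
  have hn0 : ¬ ((n : ℤ) ≤ 0) := by omega
  obtain ⟨gi, gt, gf⟩ : ∃ gi : Vtx → ZMod 2, (∀ v, v = r (0, (n : ℤ)) → gi v = 1) ∧
      ∀ v, v ≠ r (0, (n : ℤ)) → gi v = 0 :=
    ⟨fun v => if v = r (0, (n : ℤ)) then 1 else 0, fun v hv => if_pos hv, fun v hv => if_neg hv⟩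
  have gen : ∀ e ∈ SB m n, gi (r (ga n e)) + gi (r (gb n e)) ≠ 0 → e ∈ M := by
    intro e he hne
    by_contra hM
    have hB := (hall e he).resolve_left hM
    rw [hi e hB he] at hne
    exact hne (CharTwo.add_self_eq_zero _)
  refine parity_crossing m n hn h _ (fun x y => gi (r (fc n (x, y)))) ?_ ?_ ?_ ?_
  · intro x
    have := hB.ne
    simp only [GG] at this
    exact gf _ (by simpa [fc] using this)
  · intro x
    refine gt _ ?_
    have : fc n (x, (n : ℤ)) = (0, (n : ℤ)) := by unfold fc; rw [if_neg hn0, if_pos le_rfl]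
    rw [this]
  · intro x y he hne
    exact gen _ he (by simpa [ga, gb] using hne)
  · intro x y he hne
    exact gen _ he (by simpa [ga, gb] using hne)
lemma altUnion_append (l l' : List (Finset Edge)) : ∀ b : Bool, l.length % 2 = 0 →
    altUnion b (l ++ l') = altUnion b l ∪ altUnion b l' := by
  induction l using List.twoStepInduction with
  | nil => intro b _; cases b <;> simp [altUnion]
  | singleton x => intro b h; simp at h
  | cons_cons x y l ih _ =>
    intro b h
    have h' : l.length % 2 = 0 := by simp at h; omega
    cases b <;> simp [altUnion, ih _ h', Finset.union_assoc]

lemma allClaimed_append (l l' : List (Finset Edge)) :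
    allClaimed (l ++ l') = allClaimed l ∪ allClaimed l' := by
  induction l with
  | nil => simp [allClaimed]
  | cons x l ih =>
    simp only [allClaimed, List.cons_append, List.foldr_cons] at ih ⊢
    rw [ih, Finset.union_assoc]

lemma allClaimed_eq (l : List (Finset Edge)) :
    allClaimed l = firstClaimed l ∪ secondClaimed l := by
  unfold firstClaimed secondClaimed
  induction l with
  | nil => simp [allClaimed, altUnion]
  | cons x l ih =>
    simp only [allClaimed, List.foldr_cons, altUnion] at ih ⊢
    rw [ih, Finset.union_assoc, Finset.union_comm (altUnion true l)]

lemma hist_length (σ τ : Strategy) (t : ℕ) : (hist σ τ t).length % 2 = 0 := by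
  induction t with
  | zero => rfl
  | succ t ih => simp [hist]; omega

lemma first_succ (σ τ : Strategy) (t : ℕ) :
    firstClaimed (hist σ τ (t + 1)) = firstClaimed (hist σ τ t) ∪ σ (hist σ τ t) := by
  simp only [hist, firstClaimed]
  rw [altUnion_append _ _ _ (hist_length σ τ t)]
  simp [altUnion]

lemma second_succ (σ τ : Strategy) (t : ℕ) :
    secondClaimed (hist σ τ (t + 1)) =
      secondClaimed (hist σ τ t) ∪ τ (hist σ τ t ++ [σ (hist σ τ t)]) := by
  simp only [hist, secondClaimed]
  rw [altUnion_append _ _ _ (hist_length σ τ t)]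
  simp [altUnion]

lemma lam_finite (m n : ℕ) : (lamEdges m n).Finite := by
  apply Set.Finite.subset
    (((Finset.Icc (1 : ℤ) m ×ˢ Finset.Icc (1 : ℤ) n) ×ˢ (Finset.univ : Finset Bool)).finite_toSet)
  rintro ⟨⟨x, y⟩, b⟩ h
  have h1 := h.1
  simp only [lamVtx, ends, Set.mem_ofPred_eq] at h1
  simp only [Finset.mem_coe, Finset.mem_product, Finset.mem_Icc, Finset.mem_univ, and_true]
  omega

lemma SB_sub (m n : ℕ) : ∀ e ∈ SB m n, e ∈ lamEdges m n := by
  rintro ⟨⟨x, y⟩, _ | _⟩ h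
  · have := mem_SB_false.1 h
    constructor <;> simp [lamVtx, ends] <;> omega
  · have := mem_SB_true.1 h
    constructor <;> simp [lamVtx, ends] <;> omega

lemma extend_legal {board : Set Edge} (hf : board.Finite) (h : List (Finset Edge)) (p : ℕ)
    (D : Finset Edge) (hD : ∀ e ∈ D, e ∈ board) (hd : Disjoint D (allClaimed h))
    (hc : D.card ≤ p) : ∃ mv, D ⊆ mv ∧ LegalMove board h p mv := by
  classical
  have hR : ∀ e, e ∈ hf.toFinset \ allClaimed h ↔ e ∈ board \ ↑(allClaimed h) := by
    intro e; simp
  have hDR : D ⊆ hf.toFinset \ allClaimed h := by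
    intro e he
    rw [hR]
    exact ⟨hD e he, fun h => Finset.disjoint_left.1 hd he (Finset.mem_coe.1 h)⟩
  by_cases hp : p ≤ (hf.toFinset \ allClaimed h).card
  · obtain ⟨mv, h1, h2, h3⟩ := Finset.exists_subsuperset_card_eq hDR hc hp
    exact ⟨mv, h1, fun e he => (hR e).1 (h2 (Finset.mem_coe.1 he)), Or.inl h3⟩
  · exact ⟨_, hDR, fun e he => (hR e).1 (Finset.mem_coe.1 he),
      Or.inr ⟨by omega, fun e he => Finset.mem_coe.2 ((hR e).2 he)⟩⟩

open Classical in
noncomputable def strat (m n p : ℕ) : Strategy := fun h =>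
  if H : ∃ mv, LegalMove (lamEdges m n) h p mv ∧ Inv m n (firstClaimed h ∪ mv) (secondClaimed h)
  then H.choose else ∅

lemma strat_spec {m n p : ℕ} {h : List (Finset Edge)}
    (H : ∃ mv, LegalMove (lamEdges m n) h p mv ∧
      Inv m n (firstClaimed h ∪ mv) (secondClaimed h)) :
    LegalMove (lamEdges m n) h p (strat m n p h) ∧
      Inv m n (firstClaimed h ∪ strat m n p h) (secondClaimed h) := by
  unfold strat
  rw [dif_pos H]
  exact H.choose_spec

/-- **Theorem 1 (Day–Falgas-Ravry).** Let `m, n, p, q` be (positive) natural numbers.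
If `p ≥ 2q` and `n ≥ q + 1`, then Maker has a winning strategy for the
`(p,q)`-crossing game on `Λ_{m×n}`. -/
theorem maker_wins_crossing_game_on_lambda
    (m n p q : ℕ) (hm : 1 ≤ m) (hq : 1 ≤ q)
    (hp : 2 * q ≤ p) (hn : q + 1 ≤ n) :
    MakerWins (lamEdges m n) (HasCrossing m n) p q := by
  refine ⟨strat m n p, fun τ hτ => ?_⟩
  set σ := strat m n p with hσ
  have hfin := lam_finite m n
  have next : ∀ t, (∃ D ⊆ SB m n, Disjoint D (allClaimed (hist σ τ t)) ∧ D.card ≤ p ∧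
      Inv m n (firstClaimed (hist σ τ t) ∪ D) (secondClaimed (hist σ τ t))) →
      LegalMove (lamEdges m n) (hist σ τ t) p (σ (hist σ τ t)) ∧
      Inv m n (firstClaimed (hist σ τ t) ∪ σ (hist σ τ t)) (secondClaimed (hist σ τ t)) := by
    rintro t ⟨D, h1, h2, h3, h4⟩
    obtain ⟨mv, k1, k2⟩ := extend_legal hfin _ p D (fun e he => SB_sub m n e (h1 he)) h2 h3
    exact strat_spec ⟨mv, k2, h4.mono (Finset.union_subset_union_right k1)⟩
  have key : ∀ t, ∃ D ⊆ SB m n, Disjoint D (allClaimed (hist σ τ t)) ∧ D.card ≤ p ∧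
      Inv m n (firstClaimed (hist σ τ t) ∪ D) (secondClaimed (hist σ τ t)) := by
    intro t
    induction t with
    | zero =>
      refine ⟨∅, by simp, by simp, by simp, ?_⟩
      simpa [hist, firstClaimed, secondClaimed, altUnion] using inv0 m n (by omega)
    | succ t ih =>
      obtain ⟨l, i⟩ := next t ih
      rw [← first_succ] at i
      obtain ⟨f1, f2⟩ := hτ t
      set F := τ (hist σ τ t ++ [σ (hist σ τ t)]) with hF
      have hsub : firstClaimed (hist σ τ (t + 1)) ⊆ allClaimed (hist σ τ t ++ [σ (hist σ τ t)]) := by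
        rw [allClaimed_append, first_succ, allClaimed_eq]
        intro e he
        simp only [Finset.mem_union] at he ⊢
        rcases he with he | he
        · exact Or.inl (Or.inl he)
        · exact Or.inr (by simpa [allClaimed] using he)
      obtain ⟨D, d1, d2, d3, d4, d5, d6⟩ := i.step (F := F) (by
        rw [Finset.disjoint_left]
        intro e he h'
        exact (f1 (Finset.mem_coe.2 he)).2 (Finset.mem_coe.2 (hsub h'))) (by omega)
      refine ⟨D, d1, ?_, by omega, ?_⟩
      · rw [allClaimed_eq, second_succ]
        simp only [Finset.disjoint_union_right]
        exact ⟨d2, d3, d4⟩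
      · rw [second_succ]; exact d6
  refine ⟨fun t => (next t (key t)).1, ?_⟩
  have full : ∃ t, lamEdges m n ⊆ ↑(allClaimed (hist σ τ t)) := by
    by_contra hno
    push Not at hno
    have grow : ∀ t, t ≤ (hfin.toFinset ∩ allClaimed (hist σ τ t)).card := by
      intro t
      induction t with
      | zero => exact Nat.zero_le _
      | succ t ih =>
        obtain ⟨l1, l2⟩ := (next t (key t)).1
        have hne : (σ (hist σ τ t)).Nonempty := by
          rcases l2 with l2 | l2
          · rw [← Finset.card_pos]; omega
          · obtain ⟨e, he, he'⟩ := Set.not_subset.1 (hno t)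
            exact ⟨e, Finset.mem_coe.1 (l2.2 ⟨he, he'⟩)⟩
        obtain ⟨e, he⟩ := hne
        have hb := l1 (Finset.mem_coe.2 he)
        refine lt_of_le_of_lt ih (Finset.card_lt_card ?_)
        rw [Finset.ssubset_iff_of_subset]
        · refine ⟨e, ?_, ?_⟩
          · rw [Finset.mem_inter, Set.Finite.mem_toFinset, allClaimed_eq, first_succ]
            exact ⟨hb.1, Finset.mem_union_left _ (Finset.mem_union_right _ he)⟩
          · intro h
            exact hb.2 (Finset.mem_coe.2 (Finset.mem_inter.1 h).2)
        · refine Finset.inter_subset_inter_left ?_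
          rw [allClaimed_eq, allClaimed_eq, first_succ, second_succ]
          exact Finset.union_subset_union Finset.subset_union_left Finset.subset_union_left
    have h1 := grow (hfin.toFinset.card + 1)
    have h2 := Finset.card_le_card (Finset.inter_subset_left (s₁ := hfin.toFinset)
      (s₂ := allClaimed (hist σ τ (hfin.toFinset.card + 1))))
    omega
  obtain ⟨t, ht⟩ := full
  obtain ⟨D, d1, d2, d3, d4⟩ := key t
  have hD : D = ∅ := by
    rw [Finset.eq_empty_iff_forall_notMem]
    intro e he
    exact Finset.disjoint_left.1 d2 he (Finset.mem_coe.1 (ht (SB_sub m n e (d1 he))))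
  rw [hD, Finset.union_empty] at d4
  refine ⟨t, d4.crossing hm (by omega) ?_⟩
  intro e he
  have := Finset.mem_coe.1 (ht (SB_sub m n e he))
  rw [allClaimed_eq] at this
  exact Finset.mem_union.1 this

end CrossingGames
end

section
/- For all m, n ∈ ℕ and every bipartition of the edge set E(S_{m×n}) into disjoint sets E₁ and E₂ with E₁ ∪ E₂ = E(S_{m×n}), precisely one of the following two statements holds: E₁ contains a left-right crossing path of S_{m×n}, or E₂* contains a top-bottom crossing dual path of S*_{m×n}. -/
namespace CrossingGames

/-- A dual vertex: `(a,b) : ℤ × ℤ` encodes the dual vertex `(a + 0.5, b + 0.5)` of the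
dual lattice `ℤ² + (0.5, 0.5)`. Dual edges are encoded like lattice edges, in these
shifted coordinates. -/
abbrev DVtx : Type := Vtx

/-- The dual edge `e*` of a lattice edge `e`: the unique edge of the dual lattice
crossing `e` (i.e. having the same midpoint). The horizontal edge `(x+0.5, y)` has the
vertical dual edge joining `(x+0.5, y−0.5)` to `(x+0.5, y+0.5)`, and the vertical edge
`(x, y+0.5)` has the horizontal dual edge joining `(x−0.5, y+0.5)` to `(x+0.5, y+0.5)`,
expressed here in the shifted integer coordinates. -/
def dualEdge (e : Edge) : Edge :=
  if e.2 then ((e.1.1, e.1.2 - 1), false) else ((e.1.1 - 1, e.1.2), true)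

/-- `D` (a set of dual edges) contains all the dual edges of a top-bottom crossing dual
path of a board of width `n`: a dual path joining a dual vertex with second coordinate
`n + 0.5` (encoded `n`) to a dual vertex with second coordinate `0.5` (encoded `0`). -/
def HasDualCrossing (n : ℕ) (D : Set Edge) : Prop :=
  ∃ l : List DVtx,
    (∃ v, l.head? = some v ∧ v.2 = (n : ℤ)) ∧
    (∃ v, l.getLast? = some v ∧ v.2 = 0) ∧
    ∀ p ∈ cp l, ∃ d ∈ D, joins d p.1 p.2

lemma cp_cons_cons {α : Type*} (a b : α) (l : List α) : cp (a :: b :: l) = (a, b) :: cp (b :: l) := rfl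

lemma cp_sum {α : Type*} (f : α → α → ZMod 2) (g : α → ZMod 2) (l : List α) :
    ∀ u v : α, l.head? = some u → l.getLast? = some v →
    (∀ p ∈ cp l, f p.1 p.2 = g p.1 + g p.2) →
    ((cp l).map (fun p => f p.1 p.2)).sum = g u + g v := by
  induction l with
  | nil => intro u v h; simp at h
  | cons a t ih =>
    cases t with
    | nil =>
      intro u v h1 h2 _
      simp at h1 h2
      subst h1 h2
      simp [cp, CharTwo.add_self_eq_zero]
    | cons b t =>
      intro u v h1 h2 h3
      simp at h1
      subst h1
      rw [cp_cons_cons] at h3 ⊢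
      rw [List.map_cons, List.sum_cons, ih b v (by simp) (by simpa using h2)
        (fun p hp => h3 p (List.mem_cons_of_mem _ hp)), h3 (a, b) (by simp)]
      have := CharTwo.add_self_eq_zero (g b)
      linear_combination this

lemma cp_const {α β : Type*} (f : α → β) (l : List α) :
    ∀ u v : α, l.head? = some u → l.getLast? = some v →
    (∀ p ∈ cp l, f p.1 = f p.2) → f u = f v := by
  induction l with
  | nil => intro u v h; simp at h
  | cons a t ih =>
    cases t with
    | nil =>
      intro u v h1 h2 _
      simp at h1 h2
      subst h1 h2
      rfl
    | cons b t =>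
      intro u v h1 h2 h3
      simp at h1
      subst h1
      rw [cp_cons_cons] at h3
      rw [h3 (a, b) (by simp)]
      exact ih b v (by simp) (by simpa using h2) (fun p hp => h3 p (List.mem_cons_of_mem _ hp))

lemma list_of_rtg {α : Type*} (r : α → α → Prop) (P : α → Prop) (hP : ∀ x y, r x y → P x)
    (a b : α) (hb : P b) (h : Relation.ReflTransGen r a b) :
    ∃ l : List α, l.head? = some a ∧ l.getLast? = some b ∧ (∀ v ∈ l, P v) ∧
      ∀ p ∈ cp l, r p.1 p.2 := by
  induction h using Relation.ReflTransGen.head_induction_on with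
  | refl => exact ⟨[b], by simp, by simp, by simpa using hb, by simp [cp]⟩
  | head hac _ ih =>
    rename_i a c _
    obtain ⟨l, h1, h2, h3, h4⟩ := ih
    cases l with
    | nil => simp at h1
    | cons d t =>
      simp at h1
      subst h1
      refine ⟨a :: d :: t, by simp, by simpa using h2, ?_, ?_⟩
      · intro v hv
        rcases List.mem_cons.1 hv with rfl | hv
        · exact hP _ _ hac
        · exact h3 v hv
      · intro p hp
        rw [cp_cons_cons] at hp
        rcases List.mem_cons.1 hp with rfl | hp
        · exact hac
        · exact h4 p hp

lemma abstract_no (M n : ℕ) (χ c : ℤ → ℤ → ZMod 2)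
    (h1 : ∀ x y : ℤ, 1 ≤ x → x ≤ M → 1 ≤ y → y ≤ n → χ x y = χ (x+1) y ∨ c x (y-1) = c x y)
    (h2 : ∀ x y : ℤ, 2 ≤ x → x ≤ M → 1 ≤ y → y + 1 ≤ n → χ x y = χ x (y+1) ∨ c (x-1) y = c x y)
    (hl : ∀ y : ℤ, 1 ≤ y → y ≤ n → χ 1 y = 1) (hr : ∀ y : ℤ, 1 ≤ y → y ≤ n → χ (M+1) y = 0)
    (hb : ∀ x : ℤ, c x 0 = 1) (ht : ∀ x : ℤ, c x n = 0) (hn : 1 ≤ n) : False := by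
  have two : (2 : ZMod 2) = 0 := rfl
  have swap : ∀ y : ℤ, 1 ≤ y → y ≤ n →
      ∑ i ∈ Finset.range M, c (i+1) (y-1) * (χ (i+1) y + χ (i+1+1) y) =
      ∑ i ∈ Finset.range M, c (i+1) y * (χ (i+1) y + χ (i+1+1) y) := by
    intro y hy hy'
    refine Finset.sum_congr rfl fun i hi => ?_
    have := Finset.mem_range.1 hi
    rcases h1 (i+1) y (by omega) (by omega) hy hy' with h | h
    · rw [h, CharTwo.add_self_eq_zero]; simp
    · rw [h]
  have tele : ∀ y : ℤ, 1 ≤ y → y + 1 ≤ n → ∀ k : ℕ, k + 1 ≤ M →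
      ∑ i ∈ Finset.range k, c (i+1) y * (χ (i+1) y + χ (i+1+1) y) +
      ∑ i ∈ Finset.range k, c (i+1) y * (χ (i+1) (y+1) + χ (i+1+1) (y+1)) =
      c (k+1) y * (χ (k+1) y + χ (k+1) (y+1)) := by
    intro y hy hy' k
    induction k with
    | zero =>
      intro _
      simp [hl y hy (by omega), hl (y+1) (by omega) hy', CharTwo.add_self_eq_zero]
    | succ k ih =>
      intro hk
      have ih := ih (by omega)
      rw [Finset.sum_range_succ, Finset.sum_range_succ]
      push_cast
      rcases h2 (k+1+1) y (by omega) (by omega) hy hy' with h | h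
      · rw [h]
        linear_combination ih + (c (k+1) y * χ (k+1) y + c (k+1) y * χ (k+1) (y+1) + c (k+1) y * χ (k+1+1) (y+1) - c (k+1+1) y * χ (k+1+1) (y+1)) * two
      · rw [add_sub_cancel_right] at h
        rw [← h]
        linear_combination ih + (c (k+1) y * χ (k+1) y + c (k+1) y * χ (k+1) (y+1)) * two
  have hM : 1 ≤ M := by
    by_contra hM
    have hM : M = 0 := by omega
    subst hM
    have a := hl 1 le_rfl (by omega)
    have b := hr 1 le_rfl (by omega)
    simp [a] at b
  have full : ∀ y : ℤ, 1 ≤ y → y + 1 ≤ n →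
      ∑ i ∈ Finset.range M, c (i+1) y * (χ (i+1) y + χ (i+1+1) y) +
      ∑ i ∈ Finset.range M, c (i+1) y * (χ (i+1) (y+1) + χ (i+1+1) (y+1)) = 0 := by
    intro y hy hy'
    obtain ⟨k, rfl⟩ : ∃ k, M = k + 1 := ⟨M - 1, by omega⟩
    have t := tele y hy hy' k le_rfl
    rw [Finset.sum_range_succ, Finset.sum_range_succ]
    have a := hr y hy (by omega)
    have b := hr (y+1) (by omega) hy'
    push_cast at a b
    rw [a, b]
    linear_combination t + (c (k+1) y * χ (k+1) y + c (k+1) y * χ (k+1) (y+1)) * two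
  have base : ∀ k : ℕ, ∑ i ∈ Finset.range k, (χ (i+1) 1 + χ (i+1+1) 1) = χ 1 1 + χ (k+1) 1 := by
    intro k
    induction k with
    | zero => simp [CharTwo.add_self_eq_zero]
    | succ k ih =>
      rw [Finset.sum_range_succ, ih]
      push_cast
      linear_combination χ (k+1) 1 * two
  have main : ∀ k : ℕ, k + 1 ≤ n →
      ∑ i ∈ Finset.range M, c (i+1) (k+1) * (χ (i+1) (k+1) + χ (i+1+1) (k+1)) = 1 := by
    intro k
    induction k with
    | zero =>
      intro _
      have s := swap 1 le_rfl (by omega)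
      have b := base M
      rw [hl 1 le_rfl (by omega), hr 1 le_rfl (by omega)] at b
      simp only [sub_self, hb, one_mul] at s
      simp only [Nat.cast_zero, zero_add]
      rw [← s, b]; simp
    | succ k ih =>
      intro hk
      have ih := ih (by omega)
      have s := swap (k+1+1) (by omega) (by omega)
      have f := full (k+1) (by omega) (by omega)
      rw [add_sub_cancel_right] at s
      push_cast
      rw [← s]
      linear_combination f - ih - two
  obtain ⟨k, rfl⟩ : ∃ k, n = k + 1 := ⟨n - 1, by omega⟩
  have e := main k le_rfl
  push_cast at ht
  simp [ht] at e

/-- A dual step, explicitly. -/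
lemma dual_step (E : Set Edge) (p q : Vtx) :
    (∃ d ∈ dualEdge '' E, joins d p q) ↔
    ((p.1 = q.1 ∧ ((q.2 = p.2 + 1 ∧ ((p.1, p.2 + 1), true) ∈ E) ∨
        (p.2 = q.2 + 1 ∧ ((p.1, q.2 + 1), true) ∈ E))) ∨
     (p.2 = q.2 ∧ ((q.1 = p.1 + 1 ∧ ((p.1 + 1, p.2), false) ∈ E) ∨
        (p.1 = q.1 + 1 ∧ ((q.1 + 1, p.2), false) ∈ E)))) := by
  obtain ⟨p1, p2⟩ := p
  obtain ⟨q1, q2⟩ := q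
  constructor
  · rintro ⟨_, ⟨⟨⟨x, y⟩, b⟩, he, rfl⟩, hj⟩
    cases b <;> simp [joins, ends, dualEdge] at hj ⊢ <;>
      rcases hj with ⟨⟨rfl, rfl⟩, rfl, rfl⟩ | ⟨⟨rfl, rfl⟩, rfl, rfl⟩ <;> simp [he]
  · simp only
    rintro (⟨rfl, ⟨rfl, h⟩ | ⟨rfl, h⟩⟩ | ⟨rfl, ⟨rfl, h⟩ | ⟨rfl, h⟩⟩) <;>
      refine ⟨_, ⟨_, h, rfl⟩, ?_⟩ <;> simp [joins, ends, dualEdge]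

lemma step_symm {D : Set Edge} {p q : Vtx} (h : ∃ d ∈ D, joins d p q) : ∃ d ∈ D, joins d q p := by
  obtain ⟨d, hd, h⟩ := h
  exact ⟨d, hd, h.symm⟩

lemma mem_sH (m n : ℕ) (x y : ℤ) : ((x, y), true) ∈ sEdges m n ↔
    1 ≤ x ∧ x + 1 ≤ m ∧ 1 ≤ y ∧ y ≤ n := by
  simp [sEdges, lamEdges, lamVtx, ends]; omega

lemma mem_sV (m n : ℕ) (x y : ℤ) : ((x, y), false) ∈ sEdges m n ↔
    2 ≤ x ∧ x + 1 ≤ m ∧ 1 ≤ y ∧ y + 1 ≤ n := by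
  simp [sEdges, lamEdges, lamVtx, ends]; omega

lemma exists_one (m n : ℕ) (hm : 1 ≤ m) (hn : 1 ≤ n)
    (E₁ E₂ : Set Edge) (hcover : E₁ ∪ E₂ = sEdges m n)
    (hno : ¬ HasCrossing m n E₁) : HasDualCrossing n (dualEdge '' E₂) := by
  classical
  by_contra hnd
  let r1 : Vtx → Vtx → Prop := fun p q => p ∈ lamVtx m n ∧ q ∈ lamVtx m n ∧ ∃ e ∈ E₁, joins e p q
  let r2 : Vtx → Vtx → Prop := fun p q => ∃ d ∈ dualEdge '' E₂, joins d p q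
  have r1s : ∀ p q, r1 p q → r1 q p := fun p q h => ⟨h.2.1, h.1, step_symm h.2.2⟩
  have r2s : ∀ p q, r2 p q → r2 q p := fun p q h => step_symm h
  let A : Set Vtx := {v | v ∈ lamVtx m n ∧ ∃ u ∈ lamVtx m n, u.1 = 1 ∧ Relation.ReflTransGen r1 u v}
  let C : Set Vtx := {v | ∃ u : Vtx, u.2 = 0 ∧ Relation.ReflTransGen r2 v u}
  have hA : ∀ p q, r1 p q → (p ∈ A ↔ q ∈ A) := by
    have : ∀ p q, r1 p q → p ∈ A → q ∈ A := fun p q h ⟨_, u, hu, h1, h2⟩ =>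
      ⟨h.2.1, u, hu, h1, h2.tail h⟩
    exact fun p q h => ⟨this p q h, this q p (r1s p q h)⟩
  have hC : ∀ p q, r2 p q → (p ∈ C ↔ q ∈ C) := by
    have : ∀ p q, r2 p q → q ∈ C → p ∈ C := fun p q h ⟨u, h1, h2⟩ =>
      ⟨u, h1, h2.head h⟩
    exact fun p q h => ⟨this q p (r2s p q h), this p q h⟩
  obtain ⟨M, rfl⟩ : ∃ M, m = M + 1 := ⟨m - 1, by omega⟩
  refine abstract_no M n (fun x y => if (x, y) ∈ A then 1 else 0)
    (fun x y => if (x, y) ∈ C then 1 else 0) ?_ ?_ ?_ ?_ ?_ ?_ hn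
  · intro x y hx hx' hy hy'
    have hs : ((x, y), true) ∈ E₁ ∪ E₂ := by
      rw [hcover, mem_sH]; push_cast; omega
    rcases hs with hs | hs
    · left
      have := hA (x, y) (x+1, y) ⟨by simp [lamVtx]; omega, by simp [lamVtx]; omega, _, hs,
        by simp [joins, ends]⟩
      simp only [this]
    · right
      have := hC (x, y-1) (x, y) ((dual_step _ _ _).2 (by simp [hs]))
      simp only [this]
  · intro x y hx hx' hy hy'
    have hs : ((x, y), false) ∈ E₁ ∪ E₂ := by
      rw [hcover, mem_sV]; push_cast; omega
    rcases hs with hs | hs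
    · left
      have := hA (x, y) (x, y+1) ⟨by simp [lamVtx]; omega, by simp [lamVtx]; omega, _, hs,
        by simp [joins, ends]⟩
      simp only [this]
    · right
      have := hC (x-1, y) (x, y) ((dual_step _ _ _).2 (by simp [hs]))
      simp only [this]
  · intro y hy hy'
    have hl : ((1 : ℤ), y) ∈ lamVtx (M+1) n := by simp [lamVtx]; omega
    have : ((1 : ℤ), y) ∈ A := ⟨hl, _, hl, rfl, .refl⟩
    simp [this]
  · intro y hy hy'
    have : ((M + 1 : ℤ), y) ∉ A := by
      rintro ⟨hv, u, hu, h1, h2⟩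
      obtain ⟨l, a, b, c, d⟩ := list_of_rtg r1 (· ∈ lamVtx (M+1) n) (fun _ _ h => h.1) _ _ hv h2
      exact hno ⟨l, ⟨_, a, h1⟩, ⟨_, b, by simp⟩, c, fun p hp => (d p hp).2.2⟩
    simp [this]
  · intro x
    have : (x, (0 : ℤ)) ∈ C := ⟨_, rfl, .refl⟩
    simp [this]
  · intro x
    have : (x, (n : ℤ)) ∉ C := by
      rintro ⟨u, h1, h2⟩
      obtain ⟨l, a, b, _, d⟩ := list_of_rtg r2 (fun _ => True) (fun _ _ _ => trivial) _ _ trivial h2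
      exact hnd ⟨l, ⟨_, a, rfl⟩, ⟨_, b, h1⟩, d⟩
    simp [this]

/-- Indicator of a vertical dual step crossing row `y` left of `x`. -/
def fN (x y : ℤ) (p q : Vtx) : ZMod 2 :=
  if p.1 = q.1 ∧ p.1 < x ∧ ((p.2 = y - 1 ∧ q.2 = y) ∨ (p.2 = y ∧ q.2 = y - 1)) then 1 else 0

lemma not_both (m n : ℕ)
    (E₁ E₂ : Set Edge) (hdisj : Disjoint E₁ E₂) (hcover : E₁ ∪ E₂ = sEdges m n)
    (h1 : HasCrossing m n E₁) (h2 : HasDualCrossing n (dualEdge '' E₂)) : False := by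
  obtain ⟨l, ⟨a, ha, ha1⟩, ⟨b, hb, hb1⟩, hl, hE⟩ := h1
  obtain ⟨k, ⟨u, hu, hu1⟩, ⟨v, hv, hv1⟩, hk⟩ := h2
  have hk := fun p hp => (dual_step _ _ _).1 (hk p hp)
  have two : (1 + 1 : ZMod 2) = 0 := rfl
  have s2 : ∀ e ∈ E₂, e ∈ sEdges m n := fun e he => hcover ▸ Or.inr he
  have s1 : ∀ e ∈ E₁, e ∈ sEdges m n := fun e he => hcover ▸ Or.inl he
  have nd : ∀ e ∈ E₁, e ∉ E₂ := fun e h h' => Set.disjoint_left.1 hdisj h h'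
  let φ : Vtx → ZMod 2 := fun w => ((cp k).map (fun p => fN w.1 w.2 p.1 p.2)).sum
  have am := hl a (List.mem_of_mem_head? (by simp [ha]))
  have bm := hl b (List.mem_of_getLast? hb)
  have φa : φ a = 0 := by
    have := cp_sum (fN a.1 a.2) (fun _ => 0) k u v hu hv (by
      intro p hp
      have : 1 ≤ p.1.1 ∨ p.1.1 ≠ p.2.1 := by
        rcases hk p hp with ⟨h, ⟨h', h3⟩ | ⟨h', h3⟩⟩ | ⟨h, ⟨h', h3⟩ | ⟨h', h3⟩⟩
        · have := (mem_sH _ _ _ _).1 (s2 _ h3); omega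
        · have := (mem_sH _ _ _ _).1 (s2 _ h3); omega
        · omega
        · omega
      simp only [fN, add_zero]
      rw [if_neg (by omega)])
    simpa [φ] using this
  have φb : φ b = 1 := by
    have := cp_sum (fN b.1 b.2) (fun w => if b.2 ≤ w.2 then 1 else 0) k u v hu hv (by
      intro p hp
      simp only [fN]
      rcases hk p hp with ⟨h, ⟨h', h3⟩ | ⟨h', h3⟩⟩ | ⟨h, ⟨h', h3⟩ | ⟨h', h3⟩⟩
      · have := (mem_sH _ _ _ _).1 (s2 _ h3)
        split_ifs <;> first | omega | simp [two]
      · have := (mem_sH _ _ _ _).1 (s2 _ h3)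
        split_ifs <;> first | omega | simp [two]
      · split_ifs <;> first | omega | simp [two]
      · split_ifs <;> first | omega | simp [two])
    obtain ⟨_, _, h3, h4⟩ := bm
    have e : φ b = _ := this
    rw [e]
    rw [if_pos (by omega), if_neg (by omega)]; simp
  have hor : ∀ x y : ℤ, ((x, y), true) ∈ E₁ → φ (x, y) = φ (x+1, y) := by
    intro x y he
    simp only [φ]
    congr 1
    refine List.map_congr_left fun p hp => ?_
    have key : ¬ (p.1.1 = p.2.1 ∧ p.1.1 = x ∧
        ((p.1.2 = y - 1 ∧ p.2.2 = y) ∨ (p.1.2 = y ∧ p.2.2 = y - 1))) := by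
      rintro ⟨e1, e2, e3⟩
      apply nd _ he
      rcases hk p hp with ⟨h, ⟨h', h3⟩ | ⟨h', h3⟩⟩ | ⟨h, ⟨h', h3⟩ | ⟨h', h3⟩⟩
      · convert h3 using 3 <;> omega
      · convert h3 using 3 <;> omega
      · omega
      · omega
    simp only [fN]
    congr 1
    apply propext
    omega
  have ver : ∀ x y : ℤ, ((x, y), false) ∈ E₁ → φ (x, y) = φ (x, y+1) := by
    intro x y he
    have hy := (mem_sV _ _ _ _).1 (s1 _ he)
    have := cp_sum (fun p q => fN x y p q + fN x (y+1) p q)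
      (fun w => if w.2 = y ∧ w.1 < x then 1 else 0) k u v hu hv (by
      intro p hp
      have key : ¬ (p.1.2 = y ∧ p.2.2 = y ∧
          ((p.1.1 = x - 1 ∧ p.2.1 = x) ∨ (p.1.1 = x ∧ p.2.1 = x - 1))) := by
        rintro ⟨e1, e2, e3⟩
        apply nd _ he
        rcases hk p hp with ⟨h, ⟨h', h3⟩ | ⟨h', h3⟩⟩ | ⟨h, ⟨h', h3⟩ | ⟨h', h3⟩⟩
        · omega
        · omega
        · convert h3 using 3 <;> omega
        · convert h3 using 3 <;> omega
      simp only [fN]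
      rcases hk p hp with ⟨h, ⟨h', h3⟩ | ⟨h', h3⟩⟩ | ⟨h, ⟨h', h3⟩ | ⟨h', h3⟩⟩ <;> clear h3 <;>
        split_ifs <;> first | omega | simp [two])
    rw [List.sum_map_add] at this
    rw [if_neg (by omega), if_neg (by omega), add_zero] at this
    exact CharTwo.add_eq_zero.1 this
  have := cp_const φ l a b ha hb (by
    intro p hp
    obtain ⟨⟨⟨x, y⟩, t⟩, he, hj⟩ := hE p hp
    cases t
    · rcases hj with ⟨h, h'⟩ | ⟨h, h'⟩ <;> simp only [ends] at h h' <;> rw [← h, ← h']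
      · exact ver x y he
      · exact (ver x y he).symm
    · rcases hj with ⟨h, h'⟩ | ⟨h, h'⟩ <;> simp only [ends] at h h' <;> rw [← h, ← h']
      · exact hor x y he
      · exact (hor x y he).symm)
  rw [φa, φb] at this
  exact zero_ne_one this

/-- **Duality dichotomy** (Bollobás–Riordan). For every bipartition of the edge set of
`S_{m×n}` into disjoint sets `E₁` and `E₂`, precisely one of the following holds: `E₁`
contains a left-right crossing path of `S_{m×n}`, or `E₂*` contains a top-bottom
crossing dual path of `S*_{m×n}`. -/
theorem crossing_dichotomy
    (m n : ℕ) (hm : 1 ≤ m) (hn : 1 ≤ n)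
    (E₁ E₂ : Set Edge) (hdisj : Disjoint E₁ E₂) (hcover : E₁ ∪ E₂ = sEdges m n) :
    Xor' (HasCrossing m n E₁) (HasDualCrossing n (dualEdge '' E₂)) := by
  by_cases h : HasCrossing m n E₁
  · exact Or.inl ⟨h, fun h' => not_both m n E₁ E₂ hdisj hcover h h'⟩
  · exact Or.inr ⟨exists_one m n hm hn E₁ E₂ hcover h, h⟩

end CrossingGames
end

section
/- Let k ∈ ℕ. If A is a set of k edges of the square integer lattice ℤ² forming a connected subgraph with vertex set C, then the external boundary ∂^∞C contains at most 2k+4 dual edges; equivalently, the number of lattice edges with one endpoint in C and the other endpoint in the infinite component C_∞ is at most 2k+4. -/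
namespace CrossingGames

/-- The vertex set spanned by a set of lattice edges. -/
def vtxSet (A : Set Edge) : Set Vtx := {v | ∃ e ∈ A, (ends e).1 = v ∨ (ends e).2 = v}

/-- `u` and `v` are joined by a walk all of whose edges lie in `A`. -/
def ReachVia (A : Set Edge) (u v : Vtx) : Prop :=
  Relation.ReflTransGen (fun a b => ∃ e ∈ A, joins e a b) u v

/-- `u` is joined to `v` by a lattice walk avoiding the vertex set `C`
(all vertices after the starting one lie outside `C`). -/
def ReachAvoiding (C : Set Vtx) (u v : Vtx) : Prop :=
  Relation.ReflTransGen (fun a b => b ∉ C ∧ ∃ e : Edge, joins e a b) u v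

/-- The infinite component `C_∞` of the subgraph of the lattice induced by `ℤ² \ C`:
the set of vertices outside `C` whose connected component in that subgraph is infinite
(for `C` the vertex set of a finite connected subgraph this is the unique infinite
component). -/
def infComp (C : Set Vtx) : Set Vtx :=
  {w | w ∉ C ∧ {u | ReachAvoiding C w u}.Infinite}

lemma vcard (A : Finset Edge) (hA : 1 ≤ A.card)
    (hconn : ∀ u ∈ vtxSet (A : Set Edge), ∀ v ∈ vtxSet (A : Set Edge), ReachVia (A : Set Edge) u v)
    (V : Finset Vtx) (hV : ∀ v, v ∈ V ↔ v ∈ vtxSet (A : Set Edge)) : V.card ≤ A.card + 1 := by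
  classical
  let G : SimpleGraph V :=
    { Adj := fun a b => a ≠ b ∧ ∃ e ∈ A, joins e a.1 b.1
      symm := ⟨by
        rintro a b ⟨h, e, he, hj⟩
        exact ⟨h.symm, e, he, hj.symm⟩⟩
      loopless := ⟨fun a h => h.1 rfl⟩ }
  have m1 : ∀ e ∈ A, (ends e).1 ∈ V := fun e he => (hV _).2 ⟨e, he, Or.inl rfl⟩
  have m2 : ∀ e ∈ A, (ends e).2 ∈ V := fun e he => (hV _).2 ⟨e, he, Or.inr rfl⟩
  have hreach : ∀ u v : Vtx, ∀ hu : u ∈ V, ReachVia (A : Set Edge) u v →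
      ∃ hv : v ∈ V, G.Reachable ⟨u, hu⟩ ⟨v, hv⟩ := by
    intro u v hu h
    induction h with
    | refl => exact ⟨hu, SimpleGraph.Reachable.refl _⟩
    | tail _ hbc ih =>
      rename_i b c _
      obtain ⟨hb, hr⟩ := ih
      obtain ⟨e, he, hj⟩ := hbc
      have hc : c ∈ V := by
        rcases hj with ⟨_, h⟩ | ⟨h, _⟩
        · exact h ▸ m2 e he
        · exact h ▸ m1 e he
      refine ⟨hc, hr.trans ?_⟩
      by_cases hbc' : b = c
      · subst hbc'
        exact SimpleGraph.Reachable.refl _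
      · exact SimpleGraph.Adj.reachable ⟨fun h => hbc' (congrArg Subtype.val h), e, he, hj⟩
  obtain ⟨e0, he0⟩ := Finset.card_pos.1 hA
  have hG : G.Connected :=
    { preconnected := fun u v => (hreach u v u.2
        (hconn u ((hV _).1 u.2) v ((hV _).1 v.2))).2
      nonempty := ⟨⟨_, m1 e0 he0⟩⟩ }
  have h1 := hG.card_vert_le_card_edgeSet_add_one
  have h2 : Nat.card G.edgeSet ≤ A.card := by
    let f : A → Sym2 V := fun e => s(⟨_, m1 e.1 e.2⟩, ⟨_, m2 e.1 e.2⟩)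
    have hs : G.edgeSet ⊆ Set.range f := by
      intro x
      induction x using Sym2.ind with
      | _ a b =>
        rintro ⟨_, e, he, hj⟩
        refine ⟨⟨e, he⟩, ?_⟩
        rcases hj with ⟨ha, hb⟩ | ⟨hb, ha⟩
        · exact Sym2.eq_iff.2 (Or.inl ⟨Subtype.ext ha, Subtype.ext hb⟩)
        · exact Sym2.eq_iff.2 (Or.inr ⟨Subtype.ext hb, Subtype.ext ha⟩)
    calc Nat.card G.edgeSet ≤ Nat.card (Set.range f) := Nat.card_mono (Set.finite_range f) hs
      _ ≤ Nat.card A := Finite.card_range_le f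
      _ = A.card := by simp
  have h3 : Nat.card V = V.card := by simp
  omega

/-- **Isoperimetric Lemma.** If `A` is a set of `k ≥ 1` edges of the lattice `ℤ²`
forming a connected subgraph with vertex set `C`, then the external boundary `∂^∞ C`
contains at most `2k + 4` dual edges; equivalently, the number of lattice edges with one
endpoint in `C` and the other in the infinite component `C_∞` is at most `2k + 4`. -/
theorem isoperimetric_lemma (k : ℕ) (hk : 1 ≤ k) (A : Finset Edge) (hcard : A.card = k)
    (hconn : ∀ u ∈ vtxSet ↑A, ∀ v ∈ vtxSet ↑A, ReachVia ↑A u v) :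
    {e : Edge |
        ((ends e).1 ∈ vtxSet ↑A ∧ (ends e).2 ∈ infComp (vtxSet ↑A)) ∨
        ((ends e).2 ∈ vtxSet ↑A ∧ (ends e).1 ∈ infComp (vtxSet ↑A))}.ncard ≤ 2 * k + 4 := by
  classical
  let V : Finset Vtx := A.image (fun e => (ends e).1) ∪ A.image (fun e => (ends e).2)
  have hV : ∀ v, v ∈ V ↔ v ∈ vtxSet (A : Set Edge) := by
    intro v
    simp only [V, vtxSet, Finset.mem_union, Finset.mem_image, Set.mem_ofPred_eq, Finset.mem_coe]
    constructor
    · rintro (⟨e, he, h⟩ | ⟨e, he, h⟩)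
      · exact ⟨e, he, Or.inl h⟩
      · exact ⟨e, he, Or.inr h⟩
    · rintro ⟨e, he, h | h⟩
      · exact Or.inl ⟨e, he, h⟩
      · exact Or.inr ⟨e, he, h⟩
  have hc := vcard A (by omega) hconn V hV
  let S1 : Finset Edge := V ×ˢ Finset.univ
  let g : Edge → Edge := fun p => (if p.2 then (p.1.1 - 1, p.1.2) else (p.1.1, p.1.2 - 1), p.2)
  let S2 : Finset Edge := S1.image g
  have c1 : S1.card = V.card * 2 := by simp [S1]
  have c2 : S2.card ≤ V.card * 2 := c1 ▸ Finset.card_image_le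
  have e1 : ∀ e, (ends e).1 ∈ V ↔ e ∈ S1 := by
    intro e
    simp [S1, ends]
  have e2 : ∀ e, (ends e).2 ∈ V → e ∈ S2 := by
    rintro ⟨v, b⟩ h
    refine Finset.mem_image.2 ⟨((ends (v, b)).2, b), by simpa [S1] using h, ?_⟩
    cases b <;> simp [g, ends]
  have e2' : ∀ e, e ∈ S2 → (ends e).2 ∈ V := by
    intro e h
    obtain ⟨⟨v, b⟩, hp, rfl⟩ := Finset.mem_image.1 h
    have hv : v ∈ V := by simpa [S1] using hp
    cases b <;> simpa [g, ends] using hv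
  have hA : A ⊆ S1 ∩ S2 := by
    intro e he
    exact Finset.mem_inter.2 ⟨(e1 e).1 ((hV _).2 ⟨e, he, Or.inl rfl⟩),
      e2 e ((hV _).2 ⟨e, he, Or.inr rfl⟩)⟩
  have hB : {e : Edge |
        ((ends e).1 ∈ vtxSet ↑A ∧ (ends e).2 ∈ infComp (vtxSet ↑A)) ∨
        ((ends e).2 ∈ vtxSet ↑A ∧ (ends e).1 ∈ infComp (vtxSet ↑A))} ⊆
      (((S1 ∪ S2) \ (S1 ∩ S2) : Finset Edge) : Set Edge) := by
    rintro e (⟨h, h'⟩ | ⟨h, h'⟩)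
    · have ha := (e1 e).1 ((hV _).2 h)
      have hb : e ∉ S2 := fun hh => h'.1 ((hV _).1 (e2' e hh))
      simp [ha, hb]
    · have ha := e2 e ((hV _).2 h)
      have hb : e ∉ S1 := fun hh => h'.1 ((hV _).1 ((e1 e).2 hh))
      simp [ha, hb]
  have hB' := Set.ncard_le_ncard hB (Finset.finite_toSet _)
  rw [Set.ncard_coe_finset] at hB'
  have d1 := Finset.card_sdiff_add_card_eq_card
    (Finset.inter_subset_union : S1 ∩ S2 ⊆ S1 ∪ S2)
  have d2 := Finset.card_union_add_card_inter S1 S2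
  have d3 := Finset.card_le_card hA
  omega

end CrossingGames
end
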